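/- Suppose the family {ρ_{x,s}} satisfies Assumption A. Then the random code capacity C_r of the classical-quantum arbitrarily varying channel equals sup_P inf_Q I[X;B]_{P,Q}, where the supremum is over probability distributions P on 𝒳 and the infimum is over finitely supported probability distributions Q on 𝒮. -/

import Mathlib

open Filter
open scoped ComplexOrder

noncomputable section

/-- A density matrix: positive semidefinite with unit trace. -/
def IsDensity {m : Type*} [Fintype m] (ρ : Matrix m m ℂ) : Prop :=
  ρ.PosSemidef ∧ ρ.trace = 1

/-- Loewner order `A ⪯ B`. -/
def Loewner {m : Type*} [Fintype m] (A B : Matrix m m ℂ) : Prop :=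
  (B - A).PosSemidef

/-- Functional calculus for Hermitian matrices (junk value `0` on non-Hermitian input). -/
def matFun {m : Type*} [Fintype m] [DecidableEq m] (f : ℝ → ℝ) (A : Matrix m m ℂ) :
    Matrix m m ℂ :=
  if hA : A.IsHermitian then
    (hA.eigenvectorUnitary : Matrix m m ℂ) *
        Matrix.diagonal (fun i => (f (hA.eigenvalues i) : ℂ)) *
      star (hA.eigenvectorUnitary : Matrix m m ℂ)
  else 0

/-- Base-2 matrix logarithm, taken on the support. -/
def mlog2 {m : Type*} [Fintype m] [DecidableEq m] (A : Matrix m m ℂ) : Matrix m m ℂ :=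
  matFun (fun u => if u ≤ 0 then 0 else Real.logb 2 u) A

/-- Quantum relative entropy `D(ρ‖σ) = Tr[ρ(log₂ρ − log₂σ)]` (logarithms on supports). -/
def relEnt {m : Type*} [Fintype m] [DecidableEq m] (ρ σ : Matrix m m ℂ) : ℝ :=
  (Matrix.trace (ρ * (mlog2 ρ - mlog2 σ))).re

/-- The classical–quantum state `Σ_x w(x) |x⟩⟨x| ⊗ ρ_x`. -/
def cqState {X B : Type*} [DecidableEq X] (w : X → ℝ) (ρ : X → Matrix B B ℂ) :
    Matrix (X × B) (X × B) ℂ :=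
  Matrix.of fun p q => (if p.1 = q.1 then ((w p.1 : ℝ) : ℂ) else 0) * ρ p.1 p.2 q.2

/-- Tensor product of a finite family of matrices, realized on functions. -/
def tensorFam {k d : Type*} [Fintype k] (ρ : k → Matrix d d ℂ) :
    Matrix (k → d) (k → d) ℂ :=
  Matrix.of fun i j => ∏ a, ρ a (i a) (j a)

/-- Finitely supported probability distributions on `𝒮`. -/
abbrev FinProb (𝒮 : Type*) : Type _ :=
  {Q : 𝒮 →₀ ℝ // (∀ s, 0 ≤ Q s) ∧ Q.sum (fun _ a => a) = 1}

/-- Assumption A. -/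
def AssumptionA {𝒳 𝒮 : Type*} {d : ℕ} (ρ : 𝒳 → 𝒮 → Matrix (Fin d) (Fin d) ℂ) : Prop :=
  ∀ ε : ℝ, 0 < ε → ∃ Sε : Finset 𝒮, ∀ s : 𝒮, ∃ s' ∈ Sε, ∀ x : 𝒳,
    Loewner (ρ x s) ((1 + ε) • ρ x s')

/-- The mutual information `I[X;B]_{P,Q}`. -/
def mutInfI {𝒳 𝒮 : Type*} [Fintype 𝒳] [DecidableEq 𝒳] {d : ℕ}
    (ρ : 𝒳 → 𝒮 → Matrix (Fin d) (Fin d) ℂ) (P : 𝒳 → ℝ) (Q : 𝒮 →₀ ℝ) : ℝ :=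
  relEnt (cqState P (fun x => Q.sum fun s w => w • ρ x s))
    (cqState P (fun _ => ∑ x, P x • (Q.sum fun s w => w • ρ x s)))

/-- Probability distributions on the finite set `𝒳`. -/
abbrev ProbDist (𝒳 : Type*) [Fintype 𝒳] : Type _ :=
  {P : 𝒳 → ℝ // (∀ x, 0 ≤ P x) ∧ ∑ x, P x = 1}

/-!
Direct part. Fix `P` and a finite state set. For each type `Q` of state sequences the memoryless
channel `x ↦ ρ_{Q,x}` has a typical-subspace test that accepts the correct codeword with
probability tending to one and an independent one with probability about `2^{-n I(P,Q)}`. There are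
only polynomially many types, so one test can serve all of them, and random coding with the
square-root measurement yields a code that is exponentially good for every `ρ_Q`. Permuting the
positions at random makes its error depend on the type `Q` of the state sequence alone; as that
type class has polynomially large probability under `Q^n`, the error grows by at most a polynomial
factor. Assumption A reduces an arbitrary state set to a finite one at the cost `(1 + ε)^n`.

Converse. A random code good for all state sequences is good for every averaged channel `ρ_Q`. The
mean empirical letter distribution of its codewords does not depend on `Q`, and compressing the
decoder to typical subspaces bounds its rate by `I(P,Q)` for this single `P` and all `Q` at once.
-/

/-! ### Traces and unitarily diagonalised matrices -/

section Spectral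

open scoped MatrixOrder
open Matrix

lemma isHermitian_of_nonneg {ι : Type*} {A : Matrix ι ι ℂ} (h : 0 ≤ A) : A.IsHermitian :=
  (nonneg_iff_posSemidef.1 h).isHermitian

variable {ι : Type*} [Fintype ι]

/-- The real part of the trace, the pairing `Tr[DA]` of tests and states being real. -/
def reTrace : Matrix ι ι ℂ →ₗ[ℝ] ℝ :=
  Complex.reLm ∘ₗ traceLinearMap ι ℝ ℂ

lemma reTrace_apply (A : Matrix ι ι ℂ) : reTrace A = A.trace.re := rfl

lemma reTrace_mul_comm (A B : Matrix ι ι ℂ) : reTrace (A * B) = reTrace (B * A) := by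
  rw [reTrace_apply, reTrace_apply, trace_mul_comm]

lemma reTrace_nonneg {A : Matrix ι ι ℂ} (hA : 0 ≤ A) : 0 ≤ reTrace A :=
  (Complex.le_def.1 (nonneg_iff_posSemidef.1 hA).trace_nonneg).1

lemma reTrace_mul_nonneg {A B : Matrix ι ι ℂ} (hA : 0 ≤ A) (hB : 0 ≤ B) :
    0 ≤ reTrace (A * B) := by
  classical
  obtain ⟨C, rfl⟩ := CStarAlgebra.nonneg_iff_eq_star_mul_self.1 hB
  rw [← mul_assoc, reTrace_mul_comm, ← mul_assoc]
  exact reTrace_nonneg (star_right_conjugate_nonneg hA C)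

lemma reTrace_mul_le_mul_right {A A' B : Matrix ι ι ℂ} (hA : A ≤ A') (hB : 0 ≤ B) :
    reTrace (A * B) ≤ reTrace (A' * B) := by
  rw [← sub_nonneg, ← map_sub, ← sub_mul]
  exact reTrace_mul_nonneg (sub_nonneg.2 hA) hB

lemma reTrace_mul_le_mul_left {A B B' : Matrix ι ι ℂ} (hB : B ≤ B') (hA : 0 ≤ A) :
    reTrace (A * B) ≤ reTrace (A * B') := by
  rw [reTrace_mul_comm A, reTrace_mul_comm A]
  exact reTrace_mul_le_mul_right hB hA

variable [DecidableEq ι]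

/-- `U diag(g) U*` for a real diagonal `g`, bundled as an algebra homomorphism in `g`. -/
def unitaryDiagonal (U : unitaryGroup ι ℂ) : (ι → ℝ) →ₐ[ℝ] Matrix ι ι ℂ :=
  ((Unitary.conjStarAlgAut ℝ (Matrix ι ι ℂ) U).toAlgEquiv.toAlgHom.comp
    (diagonalAlgHom ℝ)).comp (Complex.ofRealAm.compLeft ι)

lemma unitaryDiagonal_apply (U : unitaryGroup ι ℂ) (g : ι → ℝ) :
    unitaryDiagonal U g
      = (U : Matrix ι ι ℂ) * diagonal (fun j => (g j : ℂ)) * star (U : Matrix ι ι ℂ) :=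
  rfl

/-- The diagonal of `A` in the orthonormal basis formed by the columns of `U`. -/
def diagInBasis (U : unitaryGroup ι ℂ) : Matrix ι ι ℂ →ₗ[ℝ] (ι → ℝ) where
  toFun A j := ((star (U : Matrix ι ι ℂ) * A * U) j j).re
  map_add' A B := by ext j; simp [mul_add, add_mul]
  map_smul' c A := by ext j; simp

lemma diagInBasis_apply (U : unitaryGroup ι ℂ) (A : Matrix ι ι ℂ) (j : ι) :
    diagInBasis U A j = ((star (U : Matrix ι ι ℂ) * A * U) j j).re := rfl

variable (U : unitaryGroup ι ℂ)

lemma isHermitian_unitaryDiagonal (g : ι → ℝ) : (unitaryDiagonal U g).IsHermitian := by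
  rw [unitaryDiagonal_apply]
  refine isHermitian_mul_mul_conjTranspose _ (isHermitian_diagonal_of_self_adjoint _ ?_)
  ext j
  simp

lemma unitaryDiagonal_nonneg {g : ι → ℝ} (hg : 0 ≤ g) : 0 ≤ unitaryDiagonal U g := by
  rw [nonneg_iff_posSemidef]
  exact (PosSemidef.diagonal fun j => by simpa using hg j).mul_mul_conjTranspose_same _

lemma unitaryDiagonal_mono {g h : ι → ℝ} (hgh : g ≤ h) :
    unitaryDiagonal U g ≤ unitaryDiagonal U h := by
  rw [← sub_nonneg, ← map_sub]
  exact unitaryDiagonal_nonneg U (sub_nonneg.2 hgh)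

lemma reTrace_mul_unitaryDiagonal (A : Matrix ι ι ℂ) (g : ι → ℝ) :
    reTrace (A * unitaryDiagonal U g) = ∑ j, g j * diagInBasis U A j := by
  rw [unitaryDiagonal_apply, ← mul_assoc, reTrace_mul_comm, ← mul_assoc, ← mul_assoc,
    reTrace_apply]
  simp only [trace, diag, mul_diagonal, Complex.re_sum]
  exact Finset.sum_congr rfl fun j _ => by
    rw [mul_comm, Complex.re_ofReal_mul, diagInBasis_apply]

variable {A : Matrix ι ι ℂ}

lemma diagInBasis_nonneg (hA : 0 ≤ A) : 0 ≤ diagInBasis U A := fun _ =>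
  (Complex.le_def.1
    (nonneg_iff_posSemidef.1 (star_left_conjugate_nonneg hA (U : Matrix ι ι ℂ))).diag_nonneg).1

variable (A) in
lemma sum_diagInBasis : ∑ j, diagInBasis U A j = reTrace A := by
  simpa using (reTrace_mul_unitaryDiagonal U A 1).symm

lemma diagInBasis_unitaryDiagonal (g : ι → ℝ) : diagInBasis U (unitaryDiagonal U g) = g := by
  have cancel : star (U : Matrix ι ι ℂ) * unitaryDiagonal U g * U
      = diagonal (fun j => (g j : ℂ)) := by
    rw [unitaryDiagonal_apply, mul_assoc (U : Matrix ι ι ℂ), ← mul_assoc (star (U : Matrix ι ι ℂ)),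
      Unitary.coe_star_mul_self, one_mul, mul_assoc, Unitary.coe_star_mul_self, mul_one]
  ext j
  rw [diagInBasis_apply, cancel, diagonal_apply_eq, Complex.ofReal_re]

/-- A chosen orthonormal eigenbasis (the standard basis if `A` is not Hermitian). -/
def eigenbasis (A : Matrix ι ι ℂ) : unitaryGroup ι ℂ :=
  if h : A.IsHermitian then h.eigenvectorUnitary else 1

/-- The eigenvalues along `eigenbasis A` (zero if `A` is not Hermitian). -/
def eigenvals (A : Matrix ι ι ℂ) : ι → ℝ :=
  if h : A.IsHermitian then h.eigenvalues else 0

lemma unitaryDiagonal_eigenvals (h : A.IsHermitian) :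
    unitaryDiagonal (eigenbasis A) (eigenvals A) = A := by
  simp only [eigenbasis, eigenvals, h, dite_true]
  exact h.spectral_theorem.symm

lemma diagInBasis_eigenbasis (h : A.IsHermitian) : diagInBasis (eigenbasis A) A = eigenvals A := by
  simpa only [unitaryDiagonal_eigenvals h] using
    diagInBasis_unitaryDiagonal (eigenbasis A) (eigenvals A)

lemma eigenvals_nonneg (h : 0 ≤ A) : 0 ≤ eigenvals A := by
  rw [← diagInBasis_eigenbasis (isHermitian_of_nonneg h)]
  exact diagInBasis_nonneg _ h

lemma sum_eigenvals (h : A.IsHermitian) : ∑ j, eigenvals A j = reTrace A := by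
  rw [← diagInBasis_eigenbasis h, sum_diagInBasis]

lemma matFun_eq_unitaryDiagonal (f : ℝ → ℝ) (h : A.IsHermitian) :
    matFun f A = unitaryDiagonal (eigenbasis A) (f ∘ eigenvals A) := by
  simp only [matFun, eigenbasis, eigenvals, h, dite_true]
  rfl

lemma aeval_unitaryDiagonal (g : ι → ℝ) (p : Polynomial ℝ) :
    Polynomial.aeval (unitaryDiagonal U g) p = unitaryDiagonal U (fun j => p.eval (g j)) := by
  rw [Polynomial.aeval_algHom_apply]
  congr 1
  ext j
  rw [Polynomial.aeval_pi_apply₂, Polynomial.coe_aeval_eq_eval]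

/-- The functional calculus does not depend on the diagonalising basis: on the finitely many
values involved, `f` agrees with an interpolating polynomial. -/
lemma matFun_unitaryDiagonal (g : ι → ℝ) (f : ℝ → ℝ) :
    matFun f (unitaryDiagonal U g) = unitaryDiagonal U (f ∘ g) := by
  have hA := isHermitian_unitaryDiagonal U g
  rw [matFun_eq_unitaryDiagonal f hA]
  set A := unitaryDiagonal U g
  let nodes : Finset ℝ := Finset.univ.image g ∪ Finset.univ.image (eigenvals A)
  let p : Polynomial ℝ := Lagrange.interpolate nodes id f
  have eval_p : ∀ x ∈ nodes, p.eval x = f x := fun x hx =>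
    Lagrange.eval_interpolate_at_node f (Set.injOn_id _) hx
  calc unitaryDiagonal (eigenbasis A) (f ∘ eigenvals A)
      = unitaryDiagonal (eigenbasis A) (fun j => p.eval (eigenvals A j)) := by
        congr 1; ext j; exact (eval_p _ (by simp [nodes])).symm
    _ = Polynomial.aeval A p := by
        rw [← aeval_unitaryDiagonal, unitaryDiagonal_eigenvals hA]
    _ = unitaryDiagonal U (fun j => p.eval (g j)) := aeval_unitaryDiagonal U g p
    _ = unitaryDiagonal U (f ∘ g) := by
        congr 1; ext j; exact eval_p _ (by simp [nodes])

end Spectral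

/-! ### Tensor products -/

section Tensor

open scoped MatrixOrder
open Matrix

variable {k : Type*} [Fintype k] {d : Type*}

lemma conjTranspose_tensorFam (A : k → Matrix d d ℂ) :
    (tensorFam A)ᴴ = tensorFam fun a => (A a)ᴴ := by
  ext i j
  simp [tensorFam, conjTranspose_apply]

lemma tensorFam_smul (c : ℝ) (A : k → Matrix d d ℂ) :
    tensorFam (fun a => c • A a) = c ^ Fintype.card k • tensorFam A := by
  ext i j
  simp [tensorFam, Finset.prod_mul_distrib]

lemma tensorFam_diagonal [DecidableEq d] (g : k → d → ℝ) :
    tensorFam (fun a => diagonal fun j => (g a j : ℂ))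
      = diagonal fun j : k → d => ((∏ a, g a (j a) : ℝ) : ℂ) := by
  ext i j
  simp only [tensorFam, of_apply, diagonal_apply]
  split_ifs with hij
  · simp [hij]
  · obtain ⟨a, ha⟩ := Function.ne_iff.1 hij
    exact Finset.prod_eq_zero (Finset.mem_univ a) (by simp [ha])

lemma tensorFam_one [DecidableEq d] : tensorFam (fun _ : k => (1 : Matrix d d ℂ)) = 1 := by
  simpa using tensorFam_diagonal fun (_ : k) (_ : d) => (1 : ℝ)

lemma tensorFam_sum_smul [DecidableEq k] {σ : Type*} (S : k → Finset σ) (c : k → σ → ℝ)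
    (A : k → σ → Matrix d d ℂ) :
    tensorFam (fun a => ∑ s ∈ S a, c a s • A a s)
      = ∑ sv ∈ Fintype.piFinset S, (∏ a, c a (sv a)) • tensorFam fun a => A a (sv a) := by
  ext i j
  simp only [tensorFam, of_apply, Matrix.sum_apply, Matrix.smul_apply]
  rw [Finset.prod_univ_sum]
  exact Finset.sum_congr rfl fun sv _ => by simp [Finset.prod_mul_distrib]

lemma tensorFam_iid_sum_smul [DecidableEq k] {X : Type*} [Fintype X] (P : X → ℝ)
    (τ : X → Matrix d d ℂ) :
    tensorFam (fun _ : k => ∑ x, P x • τ x)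
      = ∑ x : k → X, (∏ i, P (x i)) • tensorFam fun i => τ (x i) := by
  simpa using tensorFam_sum_smul (fun _ : k => Finset.univ) (fun _ => P) fun _ => τ

variable [Fintype d]

lemma trace_tensorFam [DecidableEq k] (A : k → Matrix d d ℂ) :
    (tensorFam A).trace = ∏ a, (A a).trace := by
  simp only [trace, diag, tensorFam, of_apply]
  rw [Finset.prod_univ_sum, Fintype.piFinset_univ]

variable [DecidableEq k]

lemma tensorFam_mul (A B : k → Matrix d d ℂ) :
    tensorFam A * tensorFam B = tensorFam fun a => A a * B a := by
  ext i j
  simp only [tensorFam, mul_apply, of_apply]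
  rw [Finset.prod_univ_sum, Fintype.piFinset_univ]
  exact Finset.sum_congr rfl fun l _ => Finset.prod_mul_distrib.symm

variable [DecidableEq d]

/-- The tensor product of a family of unitaries, as a unitary. -/
def tensorUnitary (U : k → unitaryGroup d ℂ) : unitaryGroup (k → d) ℂ :=
  ⟨tensorFam fun a => (U a : Matrix d d ℂ), mem_unitaryGroup_iff.2 <| by
    rw [star_eq_conjTranspose, conjTranspose_tensorFam, tensorFam_mul, ← tensorFam_one]
    exact congrArg tensorFam (funext fun a => Unitary.coe_mul_star_self (U a))⟩

lemma star_coe_tensorUnitary (U : k → unitaryGroup d ℂ) :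
    star (tensorUnitary U : Matrix (k → d) (k → d) ℂ)
      = tensorFam fun a => star (U a : Matrix d d ℂ) :=
  conjTranspose_tensorFam _

lemma tensorFam_unitaryDiagonal (U : k → unitaryGroup d ℂ) (g : k → d → ℝ) :
    tensorFam (fun a => unitaryDiagonal (U a) (g a))
      = unitaryDiagonal (tensorUnitary U) fun j => ∏ a, g a (j a) := by
  rw [unitaryDiagonal_apply, ← tensorFam_diagonal, star_coe_tensorUnitary, tensorUnitary,
    tensorFam_mul, tensorFam_mul]
  rfl

lemma tensorFam_eq_unitaryDiagonal {A : k → Matrix d d ℂ} (hA : ∀ a, (A a).IsHermitian) :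
    tensorFam A = unitaryDiagonal (tensorUnitary fun a => eigenbasis (A a))
      fun j => ∏ a, eigenvals (A a) (j a) := by
  rw [← tensorFam_unitaryDiagonal]
  exact congrArg tensorFam (funext fun a => (unitaryDiagonal_eigenvals (hA a)).symm)

lemma diagInBasis_tensorFam (U : k → unitaryGroup d ℂ) {A : k → Matrix d d ℂ}
    (hA : ∀ a, 0 ≤ A a) (j : k → d) :
    diagInBasis (tensorUnitary U) (tensorFam A) j = ∏ a, diagInBasis (U a) (A a) (j a) := by
  have entry_real : ∀ a, (star (U a : Matrix d d ℂ) * A a * U a) (j a) (j a)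
      = (diagInBasis (U a) (A a) (j a) : ℂ) := fun a =>
    Complex.ext rfl (Complex.le_def.1 (nonneg_iff_posSemidef.1
      (star_left_conjugate_nonneg (hA a) (U a : Matrix d d ℂ))).diag_nonneg).2.symm
  rw [diagInBasis_apply, star_coe_tensorUnitary, tensorUnitary, tensorFam_mul, tensorFam_mul]
  simp only [tensorFam, of_apply, entry_real, ← Complex.ofReal_prod, Complex.ofReal_re]

end Tensor

section TensorOrder

open scoped MatrixOrder
open Matrix

variable {k d : Type*} [Fintype k]

lemma tensorFam_add [DecidableEq k] (A C : k → Matrix d d ℂ) :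
    tensorFam (A + C) = ∑ s : Finset k, tensorFam (s.piecewise A C) := by
  ext i j
  simp only [tensorFam, of_apply, Matrix.sum_apply, Pi.add_apply, Matrix.add_apply]
  rw [Fintype.prod_add]
  refine Finset.sum_congr rfl fun s _ => ?_
  rw [← Finset.prod_mul_prod_compl s fun a => s.piecewise A C a (i a) (j a)]
  congr 1
  · exact Finset.prod_congr rfl fun a ha => by rw [Finset.piecewise_eq_of_mem _ _ _ ha]
  · exact Finset.prod_congr rfl fun a ha => by
      rw [Finset.piecewise_eq_of_notMem _ _ _ (Finset.mem_compl.1 ha)]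

variable [Finite d] {A B : k → Matrix d d ℂ}

lemma tensorFam_nonneg (hA : ∀ a, 0 ≤ A a) : 0 ≤ tensorFam A := by
  classical
  cases nonempty_fintype d
  rw [tensorFam_eq_unitaryDiagonal fun a => isHermitian_of_nonneg (hA a)]
  exact unitaryDiagonal_nonneg _ fun j => Finset.prod_nonneg fun a _ => eigenvals_nonneg (hA a) _

lemma tensorFam_mono (hA : ∀ a, 0 ≤ A a) (hAB : ∀ a, A a ≤ B a) :
    tensorFam A ≤ tensorFam B := by
  classical
  have terms_nonneg : ∀ s : Finset k, 0 ≤ tensorFam (s.piecewise A (B - A)) := fun s =>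
    tensorFam_nonneg fun a => by
      by_cases ha : a ∈ s
      · simpa [ha] using hA a
      · simpa [ha] using hAB a
  calc tensorFam A = tensorFam ((Finset.univ : Finset k).piecewise A (B - A)) := by simp
    _ ≤ ∑ s : Finset k, tensorFam (s.piecewise A (B - A)) :=
        Finset.single_le_sum (fun s _ => terms_nonneg s) (Finset.mem_univ _)
    _ = tensorFam B := by rw [← tensorFam_add, add_sub_cancel]

end TensorOrder

/-! ### Density matrices and entropy -/

section Density

open scoped MatrixOrder
open Matrix

variable {d : Type*} [Fintype d] {A : Matrix d d ℂ}

lemma IsDensity.nonneg (h : IsDensity A) : 0 ≤ A :=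
  nonneg_iff_posSemidef.2 h.1

lemma IsDensity.isHermitian (h : IsDensity A) : A.IsHermitian :=
  h.1.isHermitian

lemma IsDensity.reTrace_eq_one (h : IsDensity A) : reTrace A = 1 := by
  rw [reTrace_apply, h.2, Complex.one_re]

lemma isDensity_tensorFam {k : Type*} [Fintype k] [DecidableEq k] {A : k → Matrix d d ℂ}
    (h : ∀ a, IsDensity (A a)) : IsDensity (tensorFam A) :=
  ⟨nonneg_iff_posSemidef.1 (tensorFam_nonneg fun a => (h a).nonneg), by
    rw [trace_tensorFam, Finset.prod_eq_one fun a _ => (h a).2]⟩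

lemma isDensity_sum_smul {σ : Type*} {S : Finset σ} {c : σ → ℝ} {A : σ → Matrix d d ℂ}
    (hc : ∀ s ∈ S, 0 ≤ c s) (hc_sum : ∑ s ∈ S, c s = 1) (hA : ∀ s ∈ S, IsDensity (A s)) :
    IsDensity (∑ s ∈ S, c s • A s) := by
  constructor
  · rw [← nonneg_iff_posSemidef]
    exact Finset.sum_nonneg fun s hs => smul_nonneg (hc s hs) (hA s hs).nonneg
  · rw [trace_sum, Finset.sum_congr rfl fun s hs => by rw [trace_smul, (hA s hs).2],
      ← Finset.sum_smul, hc_sum, one_smul]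

variable [DecidableEq d]

/-- The von Neumann entropy, in nats. -/
def vonNeumannEntropy (A : Matrix d d ℂ) : ℝ :=
  ∑ j, Real.negMulLog (eigenvals A j)

lemma IsDensity.sum_eigenvals (h : IsDensity A) : ∑ j, eigenvals A j = 1 := by
  rw [_root_.sum_eigenvals h.isHermitian, h.reTrace_eq_one]

lemma IsDensity.eigenvals_le_one (h : IsDensity A) (j : d) : eigenvals A j ≤ 1 := by
  rw [← h.sum_eigenvals]
  exact Finset.single_le_sum (fun j _ => eigenvals_nonneg h.nonneg j) (Finset.mem_univ j)

lemma IsDensity.vonNeumannEntropy_nonneg (h : IsDensity A) : 0 ≤ vonNeumannEntropy A :=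
  Finset.sum_nonneg fun j _ =>
    Real.negMulLog_nonneg (eigenvals_nonneg h.nonneg j) (h.eigenvals_le_one j)

lemma IsDensity.vonNeumannEntropy_le_card (h : IsDensity A) :
    vonNeumannEntropy A ≤ Fintype.card d := by
  calc vonNeumannEntropy A ≤ ∑ _j : d, (1 : ℝ) := Finset.sum_le_sum fun j _ => by
        have hj := eigenvals_nonneg h.nonneg j
        linarith [Real.negMulLog_le_one_sub_self hj, show 0 ≤ eigenvals A j from hj]
    _ = Fintype.card d := by simp

end Density

/-! ### The mutual information as a Holevo quantity -/

section Holevo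

variable {X d : Type*} [Fintype X] [Fintype d] [DecidableEq d]

/-- The Holevo quantity `S(Σ_x P(x) τ_x) - Σ_x P(x) S(τ_x)`, in nats. -/
def holevoInfo (P : X → ℝ) (τ : X → Matrix d d ℂ) : ℝ :=
  vonNeumannEntropy (∑ x, P x • τ x) - ∑ x, P x * vonNeumannEntropy (τ x)

lemma sum_mul_diagInBasis_eigenbasis {P : X → ℝ} {τ : X → Matrix d d ℂ}
    (hσ : (∑ x, P x • τ x).IsHermitian) (j : d) :
    ∑ x, P x * diagInBasis (eigenbasis (∑ x, P x • τ x)) (τ x) j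
      = eigenvals (∑ x, P x • τ x) j := by
  rw [← diagInBasis_eigenbasis hσ, map_sum, Finset.sum_apply]
  simp only [map_smul, Pi.smul_apply, smul_eq_mul]

end Holevo

section CqState

open Matrix

variable {X d : Type*} [DecidableEq X]

lemma conjTranspose_cqState (w : X → ℝ) (A : X → Matrix d d ℂ) :
    (cqState w A)ᴴ = cqState w fun x => (A x)ᴴ := by
  ext ⟨x, i⟩ ⟨y, j⟩
  simp only [cqState, conjTranspose_apply, of_apply]
  by_cases h : x = y
  · subst h; simp
  · simp [h, Ne.symm h]

lemma cqState_diagonal [DecidableEq d] (w : X → ℝ) (g : X → d → ℝ) :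
    cqState w (fun x => diagonal fun j => (g x j : ℂ))
      = diagonal fun p : X × d => ((w p.1 * g p.1 p.2 : ℝ) : ℂ) := by
  ext ⟨x, i⟩ ⟨y, j⟩
  simp only [cqState, of_apply, diagonal_apply, Prod.mk.injEq]
  by_cases h : x = y
  · subst h
    by_cases h2 : i = j <;> simp [h2]
  · simp [h]

lemma cqState_one [DecidableEq d] :
    cqState (fun _ : X => 1) (fun _ => (1 : Matrix d d ℂ)) = 1 := by
  simpa using cqState_diagonal (fun _ : X => (1 : ℝ)) fun _ (_ : d) => (1 : ℝ)

variable [Fintype X] [Fintype d]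

lemma cqState_mul (w w' : X → ℝ) (A B : X → Matrix d d ℂ) :
    cqState w A * cqState w' B = cqState (fun x => w x * w' x) fun x => A x * B x := by
  ext ⟨x, i⟩ ⟨y, j⟩
  simp only [cqState, mul_apply, of_apply, Fintype.sum_prod_type]
  rw [Finset.sum_eq_single x]
  · by_cases h : x = y
    · subst h
      simp only [if_true, Finset.mul_sum]
      exact Finset.sum_congr rfl fun l _ => by push_cast; ring
    · simp [h]
  · intro z _ hz
    simp [Ne.symm hz]
  · simp

variable [DecidableEq d]

/-- The block-diagonal unitary `Σ_x |x⟩⟨x| ⊗ U_x`. -/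
def blockUnitary (U : X → unitaryGroup d ℂ) : unitaryGroup (X × d) ℂ :=
  ⟨cqState (fun _ => 1) fun x => (U x : Matrix d d ℂ), mem_unitaryGroup_iff.2 <| by
    rw [star_eq_conjTranspose, conjTranspose_cqState, cqState_mul, ← cqState_one]
    congr 1
    · ext; simp
    · exact funext fun x => Unitary.coe_mul_star_self (U x)⟩

lemma star_coe_blockUnitary (U : X → unitaryGroup d ℂ) :
    star (blockUnitary U : Matrix (X × d) (X × d) ℂ)
      = cqState (fun _ => 1) fun x => star (U x : Matrix d d ℂ) :=
  conjTranspose_cqState _ _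

lemma cqState_eq_unitaryDiagonal (w : X → ℝ) {A : X → Matrix d d ℂ}
    (hA : ∀ x, (A x).IsHermitian) :
    cqState w A = unitaryDiagonal (blockUnitary fun x => eigenbasis (A x))
      fun p => w p.1 * eigenvals (A p.1) p.2 := by
  rw [unitaryDiagonal_apply, ← cqState_diagonal w fun x => eigenvals (A x),
    star_coe_blockUnitary, blockUnitary, cqState_mul, cqState_mul]
  simp only [one_mul, mul_one]
  exact congrArg (cqState w) (funext fun x => (unitaryDiagonal_eigenvals (hA x)).symm)

lemma diagInBasis_cqState (w : X → ℝ) (U : X → unitaryGroup d ℂ) (A : X → Matrix d d ℂ)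
    (p : X × d) :
    diagInBasis (blockUnitary U) (cqState w A) p = w p.1 * diagInBasis (U p.1) (A p.1) p.2 := by
  rw [diagInBasis_apply, star_coe_blockUnitary, blockUnitary, cqState_mul, cqState_mul]
  simp [cqState, diagInBasis_apply]

lemma reTrace_mul_mlog2_cqState (w : X → ℝ) {A : X → Matrix d d ℂ}
    (hA : ∀ x, (A x).IsHermitian) (C : X → Matrix d d ℂ) :
    reTrace (cqState w C * mlog2 (cqState w A))
      = ∑ x, ∑ j, (if w x * eigenvals (A x) j ≤ 0 then 0
          else Real.logb 2 (w x * eigenvals (A x) j))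
        * (w x * diagInBasis (eigenbasis (A x)) (C x) j) := by
  rw [mlog2, cqState_eq_unitaryDiagonal w hA, matFun_unitaryDiagonal,
    reTrace_mul_unitaryDiagonal, Fintype.sum_prod_type]
  simp only [diagInBasis_cqState, Function.comp_apply]

/-- The logarithm of a vanishing product is harmless where the weight `v` vanishes too. -/
lemma logb_mul_mul_log_two {p u v : ℝ} (hp : 0 ≤ p) (hu : 0 ≤ u) (huv : u = 0 → p * v = 0) :
    (if p * u ≤ 0 then 0 else Real.logb 2 (p * u)) * (p * v) * Real.log 2
      = p * Real.log p * v + Real.log u * (p * v) := by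
  rcases hp.eq_or_lt with rfl | hp
  · simp
  rcases hu.eq_or_lt with rfl | hu
  · have hv : v = 0 := by simpa [hp.ne'] using huv rfl
    simp [hv]
  have log_two_ne : Real.log 2 ≠ 0 := (Real.log_pos one_lt_two).ne'
  rw [if_neg (mul_pos hp hu).not_ge, Real.logb, Real.log_mul hp.ne' hu.ne']
  field_simp

lemma reTrace_mul_mlog2_self {P : X → ℝ} (hP : ∀ x, 0 ≤ P x) {τ : X → Matrix d d ℂ}
    (hτ : ∀ x, IsDensity (τ x)) :
    reTrace (cqState P τ * mlog2 (cqState P τ)) * Real.log 2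
      = ∑ x, P x * Real.log (P x) - ∑ x, P x * vonNeumannEntropy (τ x) := by
  rw [reTrace_mul_mlog2_cqState P fun x => (hτ x).isHermitian, Finset.sum_mul,
    ← Finset.sum_sub_distrib]
  refine Finset.sum_congr rfl fun x _ => ?_
  rw [diagInBasis_eigenbasis (hτ x).isHermitian, Finset.sum_mul,
    Finset.sum_congr rfl fun j _ => logb_mul_mul_log_two (hP x)
      (eigenvals_nonneg (hτ x).nonneg j) fun h => by rw [h, mul_zero],
    Finset.sum_add_distrib, ← Finset.mul_sum, (hτ x).sum_eigenvals, mul_one,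
    vonNeumannEntropy, Finset.mul_sum, sub_eq_add_neg, ← Finset.sum_neg_distrib]
  congr 1
  exact Finset.sum_congr rfl fun j _ => by rw [Real.negMulLog]; ring

lemma reTrace_mul_mlog2_average {P : X → ℝ} (hP : ∀ x, 0 ≤ P x) {τ : X → Matrix d d ℂ}
    (hτ : ∀ x, IsDensity (τ x)) (hσ : IsDensity (∑ x, P x • τ x)) :
    reTrace (cqState P τ * mlog2 (cqState P fun _ => ∑ x, P x • τ x)) * Real.log 2
      = ∑ x, P x * Real.log (P x) - vonNeumannEntropy (∑ x, P x • τ x) := by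
  rw [reTrace_mul_mlog2_cqState P fun _ => hσ.isHermitian]
  have average := sum_mul_diagInBasis_eigenbasis hσ.isHermitian
  set σ := ∑ x, P x • τ x
  have weight_zero : ∀ x j, eigenvals σ j = 0 → P x * diagInBasis (eigenbasis σ) (τ x) j = 0 :=
    fun x j h => (Finset.sum_eq_zero_iff_of_nonneg fun x _ =>
      mul_nonneg (hP x) (diagInBasis_nonneg _ (hτ x).nonneg j)).1
        ((average j).trans h) x (Finset.mem_univ x)
  have summand : ∀ x j, _ = _ := fun x j =>
    logb_mul_mul_log_two (hP x) (eigenvals_nonneg hσ.nonneg j) (weight_zero x j)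
  simp_rw [Finset.sum_mul, summand, Finset.sum_add_distrib]
  rw [Finset.sum_comm (f := fun x j => Real.log (eigenvals σ j) * _)]
  simp_rw [← Finset.mul_sum, average, sum_diagInBasis, (hτ _).reTrace_eq_one, mul_one,
    vonNeumannEntropy, sub_eq_add_neg, ← Finset.sum_neg_distrib]
  congr 1
  exact Finset.sum_congr rfl fun j _ => by rw [Real.negMulLog]; ring

lemma relEnt_cqState_mul_log_two {P : X → ℝ} (hP : ∀ x, 0 ≤ P x) {τ : X → Matrix d d ℂ}
    (hτ : ∀ x, IsDensity (τ x)) (hσ : IsDensity (∑ x, P x • τ x)) :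
    relEnt (cqState P τ) (cqState P fun _ => ∑ x, P x • τ x) * Real.log 2 = holevoInfo P τ := by
  rw [relEnt, ← reTrace_apply, mul_sub, map_sub, sub_mul, reTrace_mul_mlog2_self hP hτ,
    reTrace_mul_mlog2_average hP hτ hσ, holevoInfo]
  ring

end CqState

section AveragedState

variable {𝒳 𝒮 : Type*} {d : ℕ} {ρ : 𝒳 → 𝒮 → Matrix (Fin d) (Fin d) ℂ}

/-- The state `ρ_{Q,x}` of the channel averaged over `Q`. -/
def averagedState (ρ : 𝒳 → 𝒮 → Matrix (Fin d) (Fin d) ℂ) (Q : 𝒮 →₀ ℝ) (x : 𝒳) :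
    Matrix (Fin d) (Fin d) ℂ :=
  Q.sum fun s w => w • ρ x s

lemma isDensity_averagedState (hρ : ∀ x s, IsDensity (ρ x s)) (Q : FinProb 𝒮) (x : 𝒳) :
    IsDensity (averagedState ρ Q.1 x) :=
  isDensity_sum_smul (fun s _ => Q.2.1 s) Q.2.2 fun s _ => hρ x s

lemma mutInfI_mul_log_two [Fintype 𝒳] [DecidableEq 𝒳] (hρ : ∀ x s, IsDensity (ρ x s))
    (P : ProbDist 𝒳) (Q : FinProb 𝒮) :
    mutInfI ρ P.1 Q.1 * Real.log 2 = holevoInfo P.1 (averagedState ρ Q.1) :=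
  relEnt_cqState_mul_log_two P.2.1 (isDensity_averagedState hρ Q)
    (isDensity_sum_smul (fun x _ => P.2.1 x) P.2.2 fun x _ => isDensity_averagedState hρ Q x)

end AveragedState

/-! ### A Chernoff bound -/

section Chernoff

lemma exp_le_one_add_self_add_sq_mul_exp_abs (y : ℝ) :
    Real.exp y ≤ 1 + y + y ^ 2 * Real.exp |y| := by
  have taylor := Complex.norm_exp_sub_sum_le_norm_mul_exp (y : ℂ) 2
  have remainder_eq : Complex.exp (y : ℂ) - ∑ m ∈ Finset.range 2, (y : ℂ) ^ m / (m.factorial : ℂ)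
      = ((Real.exp y - (1 + y) : ℝ) : ℂ) := by
    simp [Finset.sum_range_succ]
  rw [remainder_eq, Complex.norm_real, Complex.norm_real, Real.norm_eq_abs, Real.norm_eq_abs,
    sq_abs] at taylor
  linarith [le_abs_self (Real.exp y - (1 + y))]

lemma exp_mul_le_quadratic {s : ℝ} (hs0 : 0 ≤ s) (hs : s ≤ 1 / 2) (z : ℝ) :
    Real.exp (s * z) ≤ 1 + s * z + s ^ 2 * (z ^ 2 * Real.exp (|z| / 2)) := by
  have abs_le : |s * z| ≤ |z| / 2 := by
    rw [abs_mul, abs_of_nonneg hs0]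
    nlinarith [abs_nonneg z]
  calc Real.exp (s * z) ≤ 1 + s * z + (s * z) ^ 2 * Real.exp |s * z| :=
        exp_le_one_add_self_add_sq_mul_exp_abs _
    _ ≤ 1 + s * z + (s * z) ^ 2 * Real.exp (|z| / 2) := by gcongr
    _ = _ := by ring

variable {α : Type*}

lemma indicator_mul_prod_le_exp_mul_prod {k : Type*} [Fintype k] {w Z : k → α → ℝ}
    (hw : ∀ i a, 0 ≤ w i a) {T : Set (k → α)}
    {s t : ℝ} (hs : 0 ≤ s) (hT : ∀ j ∈ T, (∀ i, w i (j i) ≠ 0) → t ≤ ∑ i, Z i (j i))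
    (j : k → α) :
    T.indicator 1 j * ∏ i, w i (j i)
      ≤ Real.exp (-(s * t)) * ∏ i, (w i (j i) * Real.exp (s * Z i (j i))) := by
  have rhs_nonneg : 0 ≤ Real.exp (-(s * t)) * ∏ i, (w i (j i) * Real.exp (s * Z i (j i))) :=
    mul_nonneg (Real.exp_pos _).le
      (Finset.prod_nonneg fun i _ => mul_nonneg (hw i _) (Real.exp_pos _).le)
  by_cases hj : j ∈ T ∧ ∀ i, w i (j i) ≠ 0
  · have exp_ge_one : 1 ≤ Real.exp (-(s * t) + s * ∑ i, Z i (j i)) :=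
      Real.one_le_exp (by nlinarith [hT j hj.1 hj.2])
    rw [Set.indicator_of_mem hj.1, Pi.one_apply, one_mul, Finset.prod_mul_distrib, ← Real.exp_sum,
      mul_left_comm, ← Real.exp_add, ← Finset.mul_sum]
    exact le_mul_of_one_le_right (Finset.prod_nonneg fun i _ => hw _ _) exp_ge_one
  · have lhs_eq_zero : T.indicator (1 : (k → α) → ℝ) j * ∏ i, w i (j i) = 0 := by
      by_cases hjT : j ∈ T
      · obtain ⟨i, hi⟩ : ∃ i, w i (j i) = 0 := by simpa [hjT] using hj
        rw [Finset.prod_eq_zero (Finset.mem_univ i) hi, mul_zero]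
      · rw [Set.indicator_of_notMem hjT, zero_mul]
    rwa [lhs_eq_zero]

variable [Fintype α]

/-- The exponentially tilted second moment of `Z` under the weights `w`; it controls the moment
generating function of `Z` on `[0, 1/2]`. -/
def tiltedSecondMoment (w Z : α → ℝ) : ℝ :=
  ∑ a, w a * (Z a ^ 2 * Real.exp (|Z a| / 2))

lemma sum_mul_exp_le {w Z : α → ℝ} (hw : ∀ a, 0 ≤ w a) (hw1 : ∑ a, w a = 1)
    {s : ℝ} (hs0 : 0 ≤ s) (hs : s ≤ 1 / 2) :
    ∑ a, w a * Real.exp (s * Z a)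
      ≤ Real.exp (s * ∑ a, w a * Z a + s ^ 2 * tiltedSecondMoment w Z) := by
  calc ∑ a, w a * Real.exp (s * Z a)
      ≤ ∑ a, w a * (1 + s * Z a + s ^ 2 * (Z a ^ 2 * Real.exp (|Z a| / 2))) := by
        gcongr with a
        · exact hw a
        · exact exp_mul_le_quadratic hs0 hs _
    _ = s * ∑ a, w a * Z a + s ^ 2 * tiltedSecondMoment w Z + 1 := by
        simp only [tiltedSecondMoment, mul_add, mul_one, Finset.sum_add_distrib, hw1,
          Finset.mul_sum, mul_left_comm (w _)]
        ring
    _ ≤ _ := Real.add_one_le_exp _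

lemma tiltedSecondMoment_le_of_abs_le {w Z : α → ℝ} (hw : ∀ a, 0 ≤ w a) (hw1 : ∑ a, w a = 1)
    {L : ℝ} (hZ : ∀ a, |Z a| ≤ L) : tiltedSecondMoment w Z ≤ L ^ 2 * Real.exp L := by
  calc tiltedSecondMoment w Z ≤ ∑ a, w a * (L ^ 2 * Real.exp L) := by
        refine Finset.sum_le_sum fun a _ => mul_le_mul_of_nonneg_left ?_ (hw a)
        rw [← sq_abs]
        have half_le : |Z a| / 2 ≤ L := by linarith [hZ a, abs_nonneg (Z a)]
        gcongr
        exact hZ a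
    _ = _ := by rw [← Finset.sum_mul, hw1, one_mul]

lemma mul_log_sq_mul_exp_abs_log_le {l : ℝ} (h0 : 0 ≤ l) (h1 : l ≤ 1) :
    l * (Real.log l ^ 2 * Real.exp (|Real.log l| / 2)) ≤ 16 := by
  rcases h0.eq_or_lt with rfl | hl
  · norm_num
  obtain ⟨y, rfl⟩ : ∃ y, l = Real.exp (-y) := ⟨-Real.log l, by rw [neg_neg, Real.exp_log hl]⟩
  have hy : 0 ≤ y := by simpa using h1
  rw [Real.log_exp, neg_sq, abs_neg, abs_of_nonneg hy]
  have sq_le : y ^ 2 ≤ 16 * Real.exp (y / 2) := by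
    have exp_half : Real.exp (y / 2) = Real.exp (y / 4) ^ 2 := by
      rw [← Real.exp_nat_mul]; congr 1; push_cast; ring
    rw [exp_half]
    nlinarith [Real.add_one_le_exp (y / 4)]
  calc Real.exp (-y) * (y ^ 2 * Real.exp (y / 2))
      ≤ Real.exp (-y) * (16 * Real.exp (y / 2) * Real.exp (y / 2)) := by gcongr
    _ = 16 * Real.exp (-y + y / 2 + y / 2) := by rw [Real.exp_add, Real.exp_add]; ring
    _ = 16 := by simp [add_assoc]

/-- The exponent in the Chernoff bound for deviations of size `δ` per letter when the tilted second
moments are at most `K`. -/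
def chernoffRate (δ K : ℝ) : ℝ := min (1 / 2) (δ / (2 * K)) * δ / 2

lemma chernoffRate_pos {δ K : ℝ} (hδ : 0 < δ) (hK : 0 < K) : 0 < chernoffRate δ K := by
  have : 0 < min (1 / 2 : ℝ) (δ / (2 * K)) := lt_min (by norm_num) (by positivity)
  unfold chernoffRate
  positivity

theorem chernoff_bound {k : Type*} [Fintype k] [DecidableEq k] {w Z : k → α → ℝ}
    (hw : ∀ i a, 0 ≤ w i a) (hw1 : ∀ i, ∑ a, w i a = 1)
    {K δ : ℝ} (hK : 0 < K) (hδ : 0 < δ) (hKZ : ∀ i, tiltedSecondMoment (w i) (Z i) ≤ K)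
    {T : Set (k → α)} (hT : ∀ j ∈ T, (∀ i, w i (j i) ≠ 0) →
      ∑ i, ∑ a, w i a * Z i a + Fintype.card k * δ ≤ ∑ i, Z i (j i)) :
    ∑ j, T.indicator 1 j * ∏ i, w i (j i) ≤ Real.exp (-(Fintype.card k * chernoffRate δ K)) := by
  set s := min (1 / 2 : ℝ) (δ / (2 * K)) with hs
  set μ := ∑ i, ∑ a, w i a * Z i a with hμ
  have s_nonneg : 0 ≤ s := le_min (by norm_num) (by positivity)
  have s_mul_K_le : s * K ≤ δ / 2 := by
    calc s * K ≤ δ / (2 * K) * K := by gcongr; exact min_le_right _ _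
      _ = δ / 2 := by field_simp
  calc ∑ j, T.indicator 1 j * ∏ i, w i (j i)
      ≤ ∑ j, Real.exp (-(s * (μ + Fintype.card k * δ)))
          * ∏ i, (w i (j i) * Real.exp (s * Z i (j i))) :=
        Finset.sum_le_sum fun j _ => indicator_mul_prod_le_exp_mul_prod hw s_nonneg hT j
    _ = Real.exp (-(s * (μ + Fintype.card k * δ)))
          * ∏ i, ∑ a, w i a * Real.exp (s * Z i a) := by
        rw [← Finset.mul_sum, Finset.prod_univ_sum, Fintype.piFinset_univ]
    _ ≤ Real.exp (-(s * (μ + Fintype.card k * δ)))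
          * ∏ i, Real.exp (s * ∑ a, w i a * Z i a + s ^ 2 * K) := by
        gcongr with i
        · exact fun i _ => Finset.sum_nonneg fun a _ => mul_nonneg (hw i a) (Real.exp_pos _).le
        · refine (sum_mul_exp_le (hw i) (hw1 i) s_nonneg (min_le_left _ _)).trans ?_
          gcongr
          exact hKZ i
    _ = Real.exp (Fintype.card k * (s * (s * K)) - Fintype.card k * (s * δ)) := by
        rw [← Real.exp_sum, ← Real.exp_add, Finset.sum_add_distrib, ← Finset.mul_sum, ← hμ,
          Finset.sum_const, Finset.card_univ, nsmul_eq_mul]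
        ring_nf
    _ ≤ Real.exp (Fintype.card k * (s * (δ / 2)) - Fintype.card k * (s * δ)) := by gcongr
    _ = _ := by rw [chernoffRate, ← hs]; ring_nf

end Chernoff

/-! ### Square-root measurements -/

section HayashiNagaoka

open scoped MatrixOrder Matrix.Norms.L2Operator
open Matrix

variable {ι : Type*} {S T R : Matrix ι ι ℂ}

lemma isHermitian_sub_smul_one [DecidableEq ι] (hR : R.IsHermitian) (c : ℝ) :
    (R - c • (1 : Matrix ι ι ℂ)).IsHermitian := by
  simp [IsHermitian, hR.eq]

variable [Fintype ι]

lemma le_of_mul_self_le_mul_self (hS : 0 ≤ S) (hR : 0 ≤ R) (h : S * S ≤ R * R) : S ≤ R := by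
  classical
  simpa only [CFC.sqrt_mul_self S hS, CFC.sqrt_mul_self R hR] using CFC.sqrt_le_sqrt _ _ h

lemma nonneg_conj_of_isHermitian (hS : 0 ≤ S) (hR : R.IsHermitian) : 0 ≤ R * S * R := by
  simpa [star_eq_conjTranspose, hR.eq] using star_left_conjugate_nonneg hS R

lemma conj_le_conj_of_isHermitian (hST : S ≤ T) (hR : R.IsHermitian) :
    R * S * R ≤ R * T * R := by
  simpa [star_eq_conjTranspose, hR.eq] using star_left_conjugate_le_conjugate hST R

variable [DecidableEq ι]

lemma mul_self_le_self_of_le_one (hS : 0 ≤ S) (hS1 : S ≤ 1) : S * S ≤ S := by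
  simpa [sq] using CStarAlgebra.pow_antitone hS hS1 one_le_two

lemma inv_mul_self_mul_inv (hR : IsUnit R) : R⁻¹ * (R * R) * R⁻¹ = 1 := by
  have hdet := R.isUnit_iff_isUnit_det.1 hR
  rw [← mul_assoc, nonsing_inv_mul _ hdet, one_mul, mul_nonsing_inv _ hdet]

lemma inv_sub_one_conj_mul_self (hR : IsUnit R) :
    (R⁻¹ - 1) * (R * R) * (R⁻¹ - 1) = 1 - R - R + R * R := by
  have hdet := R.isUnit_iff_isUnit_det.1 hR
  calc (R⁻¹ - 1) * (R * R) * (R⁻¹ - 1)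
      = R⁻¹ * (R * R) * R⁻¹ - R⁻¹ * R * R - R * (R * R⁻¹) + R * R := by noncomm_ring
    _ = _ := by
        rw [inv_mul_self_mul_inv hR, nonsing_inv_mul _ hdet, mul_nonsing_inv _ hdet, one_mul,
          mul_one]

/-- With `Y = (S + T)^{-1/2}`, the parallelogram identity
`Y T Y + (Y - 2) T (Y - 2) = 2 (Y - 1) T (Y - 1) + 2 T` reduces the claim to the bound
`(Y - 1) T (Y - 1) ≤ (Y - 1) (S + T) (Y - 1)`, whose right-hand side is a polynomial in `R`. -/
theorem hayashi_nagaoka (hS : 0 ≤ S) (hS1 : S ≤ 1) (hT : 0 ≤ T) (hR : R.PosDef)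
    (hRR : R * R = S + T) :
    1 - R⁻¹ * S * R⁻¹ ≤ (2 : ℝ) • (1 - S) + (4 : ℝ) • T := by
  set Y := R⁻¹ with hY
  have hYherm : Y.IsHermitian := hR.1.inv
  have S_le_R : S ≤ R := le_of_mul_self_le_mul_self hS hR.posSemidef.nonneg <| by
    rw [hRR]
    exact (mul_self_le_self_of_le_one hS hS1).trans (le_add_of_nonneg_right hT)
  have middle_le : (Y - 1) * T * (Y - 1) ≤ 1 - R - R + (S + T) := by
    rw [← hRR, ← inv_sub_one_conj_mul_self hR.isUnit, hRR]
    refine conj_le_conj_of_isHermitian (le_add_of_nonneg_left hS) ?_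
    simpa using isHermitian_sub_smul_one hYherm 1
  have parallelogram : Y * T * Y + (Y - (2 : ℝ) • 1) * T * (Y - (2 : ℝ) • 1)
      = (2 : ℝ) • ((Y - 1) * T * (Y - 1)) + (2 : ℝ) • T := by
    simp only [two_smul]
    noncomm_ring
  calc 1 - Y * S * Y = Y * T * Y := by
        rw [← inv_mul_self_mul_inv hR.isUnit, hRR, ← hY]; noncomm_ring
    _ ≤ Y * T * Y + (Y - (2 : ℝ) • 1) * T * (Y - (2 : ℝ) • 1) :=
        le_add_of_nonneg_right (nonneg_conj_of_isHermitian hT (isHermitian_sub_smul_one hYherm 2))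
    _ = (2 : ℝ) • ((Y - 1) * T * (Y - 1)) + (2 : ℝ) • T := parallelogram
    _ ≤ (2 : ℝ) • (1 - S - S + (S + T)) + (2 : ℝ) • T := by
        gcongr
        exact middle_le.trans (by gcongr)
    _ = (2 : ℝ) • (1 - S) + (4 : ℝ) • T := by module

lemma isStrictlyPositive_add_smul_one (hS : 0 ≤ S) {c : ℝ} (hc : 0 < c) :
    IsStrictlyPositive (S + c • (1 : Matrix ι ι ℂ)) :=
  IsStrictlyPositive.nonneg_add hS ((isStrictlyPositive_one.smul hc))

end HayashiNagaoka

section SquareRootMeasurement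

open scoped MatrixOrder Matrix.Norms.L2Operator
open Matrix

variable {ι : Type*} [Finite ι] [DecidableEq ι]

/-- The perturbation `η` makes the normalising operator invertible; its contribution to the
completeness relation is assigned to a single outcome. -/
theorem exists_square_root_measurement {M : Type*} [Fintype M] [DecidableEq M] [Nonempty M]
    {T : M → Matrix ι ι ℂ} (hT : ∀ m, 0 ≤ T m) (hT1 : ∀ m, T m ≤ 1) {η : ℝ} (hη : 0 < η) :
    ∃ D : M → Matrix ι ι ℂ, (∀ m, 0 ≤ D m) ∧ ∑ m, D m = 1 ∧
      ∀ m, 1 - D m ≤ (2 : ℝ) • (1 - T m)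
        + (4 : ℝ) • (∑ m' ∈ Finset.univ.erase m, T m' + η • (1 : Matrix ι ι ℂ)) := by
  cases nonempty_fintype ι
  obtain ⟨m₀⟩ := ‹Nonempty M›
  have smul_one_nonneg : 0 ≤ η • (1 : Matrix ι ι ℂ) := smul_nonneg hη.le zero_le_one
  have hC := isStrictlyPositive_add_smul_one
    (Finset.sum_nonneg fun m (_ : m ∈ Finset.univ) => hT m) hη
  set R := CFC.sqrt (∑ m, T m + η • (1 : Matrix ι ι ℂ))
  have R_posDef : R.PosDef := isStrictlyPositive_iff_posDef.1 hC.sqrt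
  have R_mul_R : R * R = ∑ m, T m + η • 1 := CFC.sqrt_mul_sqrt_self _ hC.nonneg
  have conj_nonneg : ∀ {A : Matrix ι ι ℂ}, 0 ≤ A → 0 ≤ R⁻¹ * A * R⁻¹ := fun hA =>
    nonneg_conj_of_isHermitian hA R_posDef.1.inv
  set E : M → Matrix ι ι ℂ := Pi.single m₀ (R⁻¹ * (η • 1) * R⁻¹) with hE
  have E_nonneg : ∀ m, 0 ≤ E m := fun m =>
    (Pi.single_nonneg.2 (conj_nonneg smul_one_nonneg) : 0 ≤ E) m
  refine ⟨fun m => R⁻¹ * T m * R⁻¹ + E m, fun m => add_nonneg (conj_nonneg (hT m)) (E_nonneg m),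
    ?_, fun m => ?_⟩
  · rw [Finset.sum_add_distrib, hE, Finset.sum_pi_single', if_pos (Finset.mem_univ _),
      ← Finset.sum_mul, ← Finset.mul_sum, ← add_mul, ← mul_add, ← R_mul_R,
      inv_mul_self_mul_inv R_posDef.isUnit]
  · refine (sub_le_sub_left (le_add_of_nonneg_right (E_nonneg m)) _).trans
      (hayashi_nagaoka (hT m) (hT1 m)
        (add_nonneg (Finset.sum_nonneg fun m _ => hT m) smul_one_nonneg) R_posDef ?_)
    rw [R_mul_R, ← Finset.add_sum_erase _ _ (Finset.mem_univ m), add_assoc]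

end SquareRootMeasurement

/-! ### The union test -/

section UnionTest

open scoped MatrixOrder Matrix.Norms.L2Operator
open Matrix

variable {ι : Type*} [Fintype ι] [DecidableEq ι] {A B : Matrix ι ι ℂ} {c : ℝ}

/-- The operator `A / (A + c)`, a smoothed projection onto the support of `A ≥ 0`. Applied to a
sum of tests it accepts whatever one of them accepts. -/
def softSupport (A : Matrix ι ι ℂ) (c : ℝ) : Matrix ι ι ℂ :=
  1 - c • (A + c • 1)⁻¹

lemma softSupport_mono (hA : 0 ≤ A) (hAB : A ≤ B) (hc : 0 < c) :
    softSupport A c ≤ softSupport B c := by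
  unfold softSupport
  rw [nonsing_inv_eq_ringInverse, nonsing_inv_eq_ringInverse]
  exact sub_le_sub_left (smul_le_smul_of_nonneg_left (CStarAlgebra.ringInverse_le_ringInverse
    (add_le_add_left hAB _) (isStrictlyPositive_add_smul_one hA hc)) hc.le) _

lemma softSupport_eq_unitaryDiagonal (hA : 0 ≤ A) (hc : 0 < c) :
    softSupport A c
      = unitaryDiagonal (eigenbasis A) fun j => eigenvals A j / (eigenvals A j + c) := by
  have add_pos : ∀ j, 0 < eigenvals A j + c := fun j =>
    add_pos_of_nonneg_of_pos (eigenvals_nonneg hA j) hc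
  have add_eq : A + c • 1 = unitaryDiagonal (eigenbasis A) (eigenvals A + c • 1) := by
    rw [map_add, map_smul, map_one, unitaryDiagonal_eigenvals (isHermitian_of_nonneg hA)]
  have inv_eq : (A + c • 1)⁻¹
      = unitaryDiagonal (eigenbasis A) fun j => (eigenvals A j + c)⁻¹ := by
    refine inv_eq_right_inv ?_
    rw [add_eq, ← map_mul, ← map_one (unitaryDiagonal (eigenbasis A))]
    congr 1
    funext j
    simp [(add_pos j).ne']
  rw [softSupport, inv_eq, ← map_smul, ← map_one (unitaryDiagonal (eigenbasis A)), ← map_sub]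
  congr 1
  funext j
  simp only [Pi.sub_apply, Pi.one_apply, Pi.smul_apply, smul_eq_mul]
  field_simp [(add_pos j).ne']
  ring

lemma softSupport_nonneg (hA : 0 ≤ A) (hc : 0 < c) : 0 ≤ softSupport A c := by
  rw [softSupport_eq_unitaryDiagonal hA hc]
  exact unitaryDiagonal_nonneg _ fun j =>
    div_nonneg (eigenvals_nonneg hA j) (add_nonneg (eigenvals_nonneg hA j) hc.le)

lemma softSupport_le_one (hA : 0 ≤ A) (hc : 0 < c) : softSupport A c ≤ 1 := by
  rw [softSupport_eq_unitaryDiagonal hA hc, ← map_one (unitaryDiagonal (eigenbasis A))]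
  exact unitaryDiagonal_mono _ fun j =>
    div_le_one_of_le₀ (by linarith) (add_nonneg (eigenvals_nonneg hA j) hc.le)

lemma smul_softSupport_le (hA : 0 ≤ A) (hc : 0 < c) : c • softSupport A c ≤ A := by
  rw [softSupport_eq_unitaryDiagonal hA hc, ← map_smul]
  conv_rhs => rw [← unitaryDiagonal_eigenvals (isHermitian_of_nonneg hA)]
  refine unitaryDiagonal_mono _ fun j => ?_
  have hj : 0 ≤ eigenvals A j := eigenvals_nonneg hA j
  rw [Pi.smul_apply, smul_eq_mul, mul_div_assoc', div_le_iff₀ (by positivity)]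
  nlinarith

lemma eigenvals_le_one_of_le_one (hA : A.IsHermitian) (hA1 : A ≤ 1) (j : ι) :
    eigenvals A j ≤ 1 := by
  have := diagInBasis_nonneg (eigenbasis A) (sub_nonneg.2 hA1) j
  rw [map_sub, ← map_one (unitaryDiagonal (eigenbasis A)), diagInBasis_unitaryDiagonal,
    diagInBasis_eigenbasis hA] at this
  simpa using this

lemma one_sub_softSupport_le (hA : 0 ≤ A) (hA1 : A ≤ 1) (hc : 0 < c) :
    1 - softSupport A c ≤ 1 - A + c • 1 := by
  have hAherm := isHermitian_of_nonneg hA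
  rw [softSupport_eq_unitaryDiagonal hA hc]
  conv_rhs => rw [← unitaryDiagonal_eigenvals hAherm]
  rw [← map_one (unitaryDiagonal (eigenbasis A)), ← map_sub, ← map_sub, ← map_smul, ← map_add]
  refine unitaryDiagonal_mono _ fun j => ?_
  have hj : 0 ≤ eigenvals A j := eigenvals_nonneg hA j
  have hj1 : eigenvals A j ≤ 1 := eigenvals_le_one_of_le_one hAherm hA1 j
  have add_pos : 0 < eigenvals A j + c := by linarith
  simp only [Pi.sub_apply, Pi.one_apply, Pi.add_apply, Pi.smul_apply, smul_eq_mul, mul_one]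
  rw [one_sub_div add_pos.ne', div_le_iff₀ add_pos]
  nlinarith [mul_nonneg hj (sub_nonneg.2 hj1)]

lemma one_sub_softSupport_sum_le {κ : Type*} {s : Finset κ} {T : κ → Matrix ι ι ℂ}
    (hT : ∀ t ∈ s, 0 ≤ T t) {t : κ} (ht : t ∈ s) (hT1 : T t ≤ 1) (hc : 0 < c) :
    1 - softSupport (∑ t ∈ s, T t) c ≤ 1 - T t + c • 1 :=
  (sub_le_sub_left (softSupport_mono (hT t ht) (Finset.single_le_sum hT ht) hc) _).trans
    (one_sub_softSupport_le (hT t ht) hT1 hc)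

end UnionTest

/-! ### The method of types -/

section Multinomial

lemma pow_mul_factorial_le (l m : ℕ) : l ^ m * l.factorial ≤ l ^ l * m.factorial := by
  rcases le_total l m with h | h
  · calc l ^ m * l.factorial = l ^ l * (l.factorial * l ^ (m - l)) := by
          conv_lhs => rw [← Nat.add_sub_cancel' h, pow_add]
          ring
      _ ≤ l ^ l * m.factorial :=
          Nat.mul_le_mul_left _ (Nat.factorial_mul_pow_sub_le_factorial h)
  · obtain ⟨j, rfl⟩ := Nat.exists_eq_add_of_le h
    calc (m + j) ^ m * (m + j).factorial
        = (m + j) ^ m * (m.factorial * (m + 1).ascFactorial j) := by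
          rw [Nat.factorial_mul_ascFactorial]
      _ ≤ (m + j) ^ m * (m.factorial * (m + j) ^ j) := by
          gcongr
          exact Nat.ascFactorial_le_pow_add m j
      _ = _ := by ring

variable {S : Type*} [Fintype S]

/-- Among all types, the type `t` is the most likely one under the i.i.d. distribution `t / n`. -/
lemma multinomial_mul_prod_pow_le {t u : S → ℕ} (h : ∑ a, u a = ∑ a, t a) :
    Nat.multinomial Finset.univ u * ∏ a, t a ^ u a
      ≤ Nat.multinomial Finset.univ t * ∏ a, t a ^ t a := by
  have u_spec := Nat.multinomial_spec Finset.univ u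
  have t_spec := Nat.multinomial_spec Finset.univ t
  have prod_le : (∏ a, t a ^ u a) * ∏ a, (t a).factorial
      ≤ (∏ a, t a ^ t a) * ∏ a, (u a).factorial := by
    simp only [← Finset.prod_mul_distrib]
    exact Finset.prod_le_prod' fun a _ => pow_mul_factorial_le _ _
  have factorials_pos : 0 < (∏ a, (u a).factorial) * ∏ a, (t a).factorial :=
    Nat.mul_pos (Finset.prod_pos fun a _ => Nat.factorial_pos _)
      (Finset.prod_pos fun a _ => Nat.factorial_pos _)
  refine Nat.le_of_mul_le_mul_left ?_ factorials_pos
  calc (∏ a, (u a).factorial) * (∏ a, (t a).factorial) *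
        (Nat.multinomial Finset.univ u * ∏ a, t a ^ u a)
      = (∏ a, (u a).factorial) * Nat.multinomial Finset.univ u *
        ((∏ a, t a ^ u a) * ∏ a, (t a).factorial) := by ring
    _ ≤ (∑ a, t a).factorial * ((∏ a, t a ^ t a) * ∏ a, (u a).factorial) := by
        rw [u_spec, h]
        exact Nat.mul_le_mul_left _ prod_le
    _ = _ := by rw [← t_spec]; ring

lemma card_piAntidiag_univ_le [DecidableEq S] (n : ℕ) :
    ((Finset.univ : Finset S).piAntidiag n).card ≤ (n + 1) ^ Fintype.card S := by
  have subset_box : (Finset.univ : Finset S).piAntidiag n ⊆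
      Fintype.piFinset fun _ : S => Finset.range (n + 1) := fun u hu =>
    Fintype.mem_piFinset.2 fun a => by
      rw [Finset.mem_range, Nat.lt_succ_iff, ← (Finset.mem_piAntidiag.1 hu).1]
      exact Finset.single_le_sum (fun _ _ => Nat.zero_le _) (Finset.mem_univ a)
  simpa using Finset.card_le_card subset_box

lemma sum_pow_sum_le_multinomial (t : S → ℕ) :
    (∑ a, t a) ^ (∑ a, t a) ≤ ((∑ a, t a) + 1) ^ Fintype.card S *
      (Nat.multinomial Finset.univ t * ∏ a, t a ^ t a) := by
  classical
  calc (∑ a, t a) ^ (∑ a, t a)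
      = ∑ u ∈ Finset.univ.piAntidiag (∑ a, t a),
          Nat.multinomial Finset.univ u * ∏ a, t a ^ u a := by
        rw [Finset.sum_pow_eq_sum_piAntidiag]
        rfl
    _ ≤ (Finset.univ.piAntidiag (∑ a, t a)).card *
          (Nat.multinomial Finset.univ t * ∏ a, t a ^ t a) := by
        rw [← smul_eq_mul]
        exact Finset.sum_le_card_nsmul _ _ _ fun u hu =>
          multinomial_mul_prod_pow_le (Finset.mem_piAntidiag.1 hu).1
    _ ≤ _ := Nat.mul_le_mul_right _ (card_piAntidiag_univ_le _)

end Multinomial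

section Types

variable {S : Type*} [DecidableEq S] {k : Type*} [Fintype k]

/-- The type of a word `s`: how often each letter occurs in it. -/
def letterCount (s : k → S) (a : S) : ℕ := Fintype.card {i // s i = a}

lemma letterCount_comp_perm (s : k → S) (π : Equiv.Perm k) :
    letterCount (s ∘ π) = letterCount s :=
  funext fun _ => Fintype.card_congr (π.subtypeEquiv fun _ => Iff.rfl)

/-- The relative frequency of each letter in the word `s`. -/
def empiricalDist (s : k → S) (a : S) : ℝ := letterCount s a / Fintype.card k

lemma empiricalDist_nonneg (s : k → S) (a : S) : 0 ≤ empiricalDist s a := by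
  unfold empiricalDist; positivity

variable [Fintype S]

lemma sum_letterCount (s : k → S) : ∑ a, letterCount s a = Fintype.card k := by
  unfold letterCount
  rw [← Fintype.card_sigma]
  exact Fintype.card_congr (Equiv.sigmaFiberEquiv s)

lemma sum_letterCount_mul (s : k → S) (w : S → ℝ) :
    ∑ a, letterCount s a * w a = ∑ i, w (s i) := by
  rw [← Finset.sum_fiberwise' Finset.univ s w]
  refine Finset.sum_congr rfl fun a _ => ?_
  rw [Finset.sum_const, letterCount, Fintype.card_subtype, nsmul_eq_mul]

lemma sum_empiricalDist_mul (s : k → S) (w : S → ℝ) :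
    ∑ a, empiricalDist s a * w a = (∑ i, w (s i)) / Fintype.card k := by
  simp only [empiricalDist, div_mul_eq_mul_div, ← Finset.sum_div, sum_letterCount_mul]

lemma sum_empiricalDist [Nonempty k] (s : k → S) : ∑ a, empiricalDist s a = 1 := by
  simpa using sum_empiricalDist_mul s 1

lemma prod_eq_prod_pow_letterCount (s : k → S) (q : S → ℝ) :
    ∏ i, q (s i) = ∏ a, q a ^ letterCount s a := by
  rw [← Finset.prod_fiberwise' Finset.univ s q]
  refine Finset.prod_congr rfl fun a _ => ?_
  rw [Finset.prod_const, letterCount, Fintype.card_subtype]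

lemma prod_empiricalDist_comp_perm (s : k → S) (π : Equiv.Perm k) :
    ∏ i, empiricalDist s ((s ∘ π) i)
      = (∏ a, (letterCount s a : ℝ) ^ letterCount s a)
          / (Fintype.card k : ℝ) ^ Fintype.card k := by
  rw [prod_eq_prod_pow_letterCount, letterCount_comp_perm]
  unfold empiricalDist
  simp only [div_pow]
  rw [Finset.prod_div_distrib, Finset.prod_pow_eq_pow_sum, sum_letterCount]

variable [DecidableEq k]

lemma card_perm_comp_eq_le (s s' : k → S) :
    (Finset.univ.filter fun π : Equiv.Perm k => s ∘ π = s').card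
      ≤ ∏ a, (letterCount s a).factorial := by
  by_cases h : ∃ π : Equiv.Perm k, s ∘ π = s'
  · obtain ⟨π₀, rfl⟩ := h
    unfold letterCount
    rw [← DomMulAct.stabilizer_card s, Fintype.card_subtype]
    refine Finset.card_le_card_of_injOn (fun π => π * π₀⁻¹) (fun π hπ => ?_)
      fun _ _ _ _ => mul_right_cancel
    simp only [Finset.coe_filter, Finset.mem_univ, true_and, Set.mem_ofPred_eq] at hπ ⊢
    funext i
    simpa using congrFun hπ (π₀⁻¹ i)
  · rw [Finset.filter_eq_empty_iff.2 fun π _ hπ => h ⟨π, hπ⟩]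
    simp

lemma card_perm_comp_eq_div_factorial_le [Nonempty k] (s s' : k → S) :
    ((Finset.univ.filter fun π : Equiv.Perm k => s ∘ π = s').card : ℝ)
        / (Fintype.card k).factorial
      ≤ ((Fintype.card k : ℝ) + 1) ^ Fintype.card S * ∏ i, empiricalDist s (s' i) := by
  rcases Finset.eq_empty_or_nonempty
    (Finset.univ.filter fun π : Equiv.Perm k => s ∘ π = s') with hempty | ⟨π, hπ⟩
  · rw [hempty, Finset.card_empty, Nat.cast_zero, zero_div]
    exact mul_nonneg (by positivity) (Finset.prod_nonneg fun i _ => empiricalDist_nonneg _ _)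
  have hits_le := card_perm_comp_eq_le s s'
  have pow_le := sum_pow_sum_le_multinomial (letterCount s)
  have factorial_eq := Nat.multinomial_spec Finset.univ (letterCount s)
  rw [sum_letterCount] at pow_le factorial_eq
  obtain rfl := (Finset.mem_filter.1 hπ).2
  rw [prod_empiricalDist_comp_perm, ← mul_div_assoc,
    div_le_div_iff₀ (by exact_mod_cast Nat.factorial_pos _)
      (pow_pos (by exact_mod_cast Fintype.card_pos) _), ← factorial_eq]
  norm_cast
  calc _ ≤ (∏ a, (letterCount s a).factorial) * ((Fintype.card k + 1) ^ Fintype.card S *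
        (Nat.multinomial Finset.univ (letterCount s) *
          ∏ a, letterCount s a ^ letterCount s a)) := Nat.mul_le_mul hits_le pow_le
    _ = _ := by ring

theorem sum_perm_div_factorial_le [Nonempty k] (s : k → S) {F : (k → S) → ℝ}
    (hF : ∀ s', 0 ≤ F s') :
    (∑ π : Equiv.Perm k, F (s ∘ π)) / (Fintype.card k).factorial
      ≤ ((Fintype.card k : ℝ) + 1) ^ Fintype.card S *
          ∑ s', (∏ i, empiricalDist s (s' i)) * F s' := by
  rw [← Finset.sum_fiberwise' Finset.univ (fun π : Equiv.Perm k => s ∘ π) F, Finset.sum_div,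
    Finset.mul_sum]
  refine Finset.sum_le_sum fun s' _ => ?_
  rw [Finset.sum_const, nsmul_eq_mul, mul_div_right_comm, ← mul_assoc]
  exact mul_le_mul_of_nonneg_right (card_perm_comp_eq_div_factorial_le s s') (hF s')

end Types

/-! ### Pinching and spectral projections -/

section Pinching

open scoped MatrixOrder
open Matrix

variable {ι : Type*} [Fintype ι] [DecidableEq ι]

lemma le_pinching {A P : Matrix ι ι ℂ} (hA : 0 ≤ A) (hP : P.IsHermitian) {η : ℝ} (hη : 0 < η) :
    A ≤ (1 + η) • (P * A * P) + (1 + η⁻¹) • ((1 - P) * A * (1 - P)) := by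
  have sqrt_mul_sqrt : √η * √η = η := Real.mul_self_sqrt hη.le
  have inv_mul_inv : (√η)⁻¹ * (√η)⁻¹ = η⁻¹ := by rw [← mul_inv, sqrt_mul_sqrt]
  have mul_inv_sqrt : √η * (√η)⁻¹ = 1 := mul_inv_cancel₀ (Real.sqrt_pos.2 hη).ne'
  have hR : (√η • P - (√η)⁻¹ • (1 - P)).IsHermitian :=
    (hP.smul (IsSelfAdjoint.all _)).sub ((isHermitian_one.sub hP).smul (IsSelfAdjoint.all _))
  rw [← sub_nonneg]
  refine (nonneg_conj_of_isHermitian hA hR).trans_eq ?_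
  have split_one : A = P * A * P + P * A * (1 - P) + (1 - P) * A * P + (1 - P) * A * (1 - P) := by
    noncomm_ring
  generalize 1 - P = P' at split_one ⊢
  calc (√η • P - (√η)⁻¹ • P') * A * (√η • P - (√η)⁻¹ • P')
      = η • (P * A * P) - P * A * P' - P' * A * P + η⁻¹ • (P' * A * P') := by
        simp only [sub_mul, mul_sub, smul_mul_assoc, mul_smul_comm, smul_sub, smul_smul,
          sqrt_mul_sqrt, inv_mul_inv, mul_inv_sqrt, mul_comm _ (√η)]
        module
    _ = (1 + η) • (P * A * P) + (1 + η⁻¹) • (P' * A * P')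
          - (P * A * P + P * A * P' + P' * A * P + P' * A * P') := by module
    _ = _ := by rw [← split_one]

lemma reTrace_one_sub_conj_mul_le {P Q τ : Matrix ι ι ℂ} (hP : IsStarProjection P) (hQ : 0 ≤ Q)
    (hQ1 : Q ≤ 1) (hτ : IsDensity τ) {η : ℝ} (hη : 0 < η) :
    reTrace ((1 - P * Q * P) * τ)
      ≤ reTrace ((1 - Q) * τ) + η + (1 + η⁻¹) * reTrace ((1 - P) * τ) := by
  have reTrace_one_sub : ∀ R, reTrace ((1 - R) * τ) = 1 - reTrace (R * τ) := fun R => by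
    rw [sub_mul, one_mul, map_sub, hτ.reTrace_eq_one]
  have hPQP : reTrace (P * Q * P * τ) ≤ 1 := by
    rw [← hτ.reTrace_eq_one, ← one_mul τ, ← mul_assoc, mul_one]
    refine reTrace_mul_le_mul_right ?_ hτ.nonneg
    calc P * Q * P ≤ P * 1 * P := conj_le_conj_of_isHermitian hQ1 hP.isSelfAdjoint
      _ ≤ 1 := by rw [mul_one, hP.isIdempotentElem.eq]; exact hP.le_one
  have hcompl : reTrace ((1 - P) * Q * (1 - P) * τ) ≤ reTrace ((1 - P) * τ) := by
    refine reTrace_mul_le_mul_right ?_ hτ.nonneg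
    refine (conj_le_conj_of_isHermitian hQ1 hP.one_sub.isSelfAdjoint).trans_eq ?_
    rw [mul_one, hP.one_sub.isIdempotentElem.eq]
  have hpinch : reTrace (Q * τ) ≤ (1 + η) * reTrace (P * Q * P * τ)
      + (1 + η⁻¹) * reTrace ((1 - P) * Q * (1 - P) * τ) := by
    simpa only [add_mul, smul_mul_assoc, map_add, map_smul, smul_eq_mul] using
      reTrace_mul_le_mul_right (le_pinching hQ hP.isSelfAdjoint hη) hτ.nonneg
  rw [reTrace_one_sub, reTrace_one_sub]
  calc 1 - reTrace (P * Q * P * τ)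
      = 1 - (1 + η) * reTrace (P * Q * P * τ) + η * reTrace (P * Q * P * τ) := by ring
    _ ≤ 1 - reTrace (Q * τ) + (1 + η⁻¹) * reTrace ((1 - P) * Q * (1 - P) * τ) + η * 1 := by
        gcongr ?_ + η * ?_
        linarith
    _ ≤ 1 - reTrace (Q * τ) + (1 + η⁻¹) * reTrace ((1 - P) * τ) + η * 1 := by gcongr
    _ = _ := by ring

/-- The projection onto the span of those columns of the unitary `U` whose index lies in `S`. -/
def spectralProj (U : unitaryGroup ι ℂ) (S : Set ι) : Matrix ι ι ℂ :=
  unitaryDiagonal U (S.indicator 1)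

lemma isStarProjection_spectralProj (U : unitaryGroup ι ℂ) (S : Set ι) :
    IsStarProjection (spectralProj U S) where
  isIdempotentElem := by
    rw [IsIdempotentElem, spectralProj, ← map_mul]
    congr 1
    ext j
    by_cases hj : j ∈ S <;> simp [hj]
  isSelfAdjoint := isHermitian_unitaryDiagonal U _

lemma reTrace_one_sub_spectralProj_mul (U : unitaryGroup ι ℂ) (S : Set ι) (A : Matrix ι ι ℂ) :
    reTrace ((1 - spectralProj U S) * A) = ∑ j, Sᶜ.indicator 1 j * diagInBasis U A j := by
  rw [reTrace_mul_comm, spectralProj, ← map_one (unitaryDiagonal U), ← map_sub,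
    reTrace_mul_unitaryDiagonal, Set.indicator_compl]

lemma spectralProj_conj_unitaryDiagonal_le (U : unitaryGroup ι ℂ) {S : Set ι} {g h : ι → ℝ}
    (hgh : ∀ j ∈ S, g j ≤ h j) (hh : 0 ≤ h) :
    spectralProj U S * unitaryDiagonal U g * spectralProj U S ≤ unitaryDiagonal U h := by
  rw [spectralProj, ← map_mul, ← map_mul]
  refine unitaryDiagonal_mono U fun j => ?_
  by_cases hj : j ∈ S
  · simpa [hj] using hgh j hj
  · simpa [hj] using hh j

end Pinching

/-! ### Typical projections -/

section TypicalProjections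

open scoped MatrixOrder
open Matrix

variable {k : Type*} [Fintype k] [DecidableEq k] {d : Type*} [Fintype d] [DecidableEq d]

/-- The projection of the `k`-fold tensor space onto the span of those product basis vectors on
which the product weight `∏ i, r i (j i)` is at least `exp (-c)`. -/
def largeWeightProj (U : k → unitaryGroup d ℂ) (r : k → d → ℝ) (c : ℝ) :
    Matrix (k → d) (k → d) ℂ :=
  spectralProj (tensorUnitary U) {j | Real.exp (-c) ≤ ∏ i, r i (j i)}

/-- The projection of the `k`-fold tensor space onto the span of those product basis vectors on
which the product weight `∏ i, r i (j i)` is at most `exp (-c)`. -/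
def smallWeightProj (U : k → unitaryGroup d ℂ) (r : k → d → ℝ) (c : ℝ) :
    Matrix (k → d) (k → d) ℂ :=
  spectralProj (tensorUnitary U) {j | ∏ i, r i (j i) ≤ Real.exp (-c)}

lemma isStarProjection_largeWeightProj (U : k → unitaryGroup d ℂ) (r : k → d → ℝ) (c : ℝ) :
    IsStarProjection (largeWeightProj U r c) :=
  isStarProjection_spectralProj _ _

lemma isStarProjection_smallWeightProj (U : k → unitaryGroup d ℂ) (r : k → d → ℝ) (c : ℝ) :
    IsStarProjection (smallWeightProj U r c) :=
  isStarProjection_spectralProj _ _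

lemma largeWeightProj_le (U : k → unitaryGroup d ℂ) {r : k → d → ℝ} (hr : ∀ i j, 0 ≤ r i j)
    (c : ℝ) :
    largeWeightProj U r c ≤ Real.exp c • tensorFam fun i => unitaryDiagonal (U i) (r i) := by
  rw [tensorFam_unitaryDiagonal, largeWeightProj, spectralProj, ← map_smul]
  refine unitaryDiagonal_mono _ <| Set.indicator_le' (fun j hj => ?_) fun j _ => ?_
  · calc (1 : ℝ) = Real.exp c * Real.exp (-c) := by
          rw [← Real.exp_add, add_neg_cancel, Real.exp_zero]
      _ ≤ Real.exp c * ∏ i, r i (j i) := by gcongr; exact hj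
  · exact mul_nonneg (Real.exp_pos c).le (Finset.prod_nonneg fun i _ => hr i (j i))

lemma smallWeightProj_conj_tensorFam_le (U : k → unitaryGroup d ℂ) (r : k → d → ℝ) (c : ℝ) :
    smallWeightProj U r c * (tensorFam fun i => unitaryDiagonal (U i) (r i)) * smallWeightProj U r c
      ≤ Real.exp (-c) • (1 : Matrix (k → d) (k → d) ℂ) := by
  rw [tensorFam_unitaryDiagonal, ← map_one (unitaryDiagonal (tensorUnitary U)), ← map_smul]
  refine spectralProj_conj_unitaryDiagonal_le _ (fun j hj => ?_) fun j => ?_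
  · simpa using hj
  · simpa using (Real.exp_pos _).le

lemma tiltedSecondMoment_log_eigenvals_le {A : Matrix d d ℂ} (hA : IsDensity A) :
    tiltedSecondMoment (eigenvals A) (fun j => Real.log (eigenvals A j))
      ≤ 16 * Fintype.card d := by
  refine (Finset.sum_le_card_nsmul _ _ 16 fun j _ => mul_log_sq_mul_exp_abs_log_le
    (eigenvals_nonneg hA.nonneg j) (hA.eigenvals_le_one j)).trans_eq ?_
  rw [nsmul_eq_mul, Finset.card_univ, mul_comm]

lemma sum_eigenvals_mul_log (A : Matrix d d ℂ) :
    ∑ j, eigenvals A j * Real.log (eigenvals A j) = -vonNeumannEntropy A := by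
  simp [vonNeumannEntropy, Real.negMulLog]

lemma reTrace_one_sub_smallWeightProj_le [Nonempty d] {τ : k → Matrix d d ℂ}
    (hτ : ∀ i, IsDensity (τ i)) {δ : ℝ} (hδ : 0 < δ) :
    reTrace ((1 - smallWeightProj (fun i => eigenbasis (τ i)) (fun i => eigenvals (τ i))
        (∑ i, vonNeumannEntropy (τ i) - Fintype.card k * δ)) * tensorFam τ)
      ≤ Real.exp (-(Fintype.card k * chernoffRate δ (16 * Fintype.card d))) := by
  rw [smallWeightProj, reTrace_one_sub_spectralProj_mul]
  simp only [diagInBasis_tensorFam _ fun i => (hτ i).nonneg,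
    diagInBasis_eigenbasis (hτ _).isHermitian]
  refine chernoff_bound (Z := fun i j => Real.log (eigenvals (τ i) j))
    (fun i => eigenvals_nonneg (hτ i).nonneg) (fun i => (hτ i).sum_eigenvals) (by positivity) hδ
    (fun i => tiltedSecondMoment_log_eigenvals_le (hτ i)) fun j hj hne => ?_
  rw [Set.mem_compl_iff, Set.mem_ofPred_eq, not_le] at hj
  have hlog := Real.log_lt_log (Real.exp_pos _) hj
  rw [Real.log_exp, Real.log_prod fun i _ => hne i] at hlog
  simp only [sum_eigenvals_mul_log, Finset.sum_neg_distrib]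
  linarith

variable {X : Type*} [Fintype X]

lemma sum_prod_eq_one {P : X → ℝ} (hP1 : ∑ x, P x = 1) : ∑ x : k → X, ∏ i, P (x i) = 1 := by
  rw [← Fintype.piFinset_univ, ← Finset.prod_univ_sum, Finset.prod_congr rfl fun _ _ => hP1,
    Finset.prod_const_one]

lemma sum_indicator_joint_eigenvals_le [Nonempty d] {P : X → ℝ} (hP : ∀ x, 0 ≤ P x)
    (hP1 : ∑ x, P x = 1) {τ : X → Matrix d d ℂ} (hτ : ∀ x, IsDensity (τ x)) {δ : ℝ} (hδ : 0 < δ) :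
    ∑ y : k → X × d, {y : k → X × d | ∏ i, eigenvals (τ (y i).1) (y i).2
          < Real.exp (-(Fintype.card k * (∑ x, P x * vonNeumannEntropy (τ x) + δ)))}.indicator 1 y
        * ∏ i, (P (y i).1 * eigenvals (τ (y i).1) (y i).2)
      ≤ Real.exp (-(Fintype.card k * chernoffRate δ (16 * Fintype.card d))) := by
  have nonneg : ∀ x j, 0 ≤ eigenvals (τ x) j := fun x => eigenvals_nonneg (hτ x).nonneg
  refine chernoff_bound (w := fun (_ : k) (a : X × d) => P a.1 * eigenvals (τ a.1) a.2)
    (Z := fun _ a => -Real.log (eigenvals (τ a.1) a.2))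
    (fun _ a => mul_nonneg (hP _) (nonneg _ _)) (fun _ => ?_) (by positivity) hδ
    (fun _ => ?_) fun y hy hne => ?_
  · simp only [Fintype.sum_prod_type, ← Finset.mul_sum, (hτ _).sum_eigenvals, mul_one, hP1]
  · calc _ = ∑ x, P x * tiltedSecondMoment (eigenvals (τ x))
            (fun j => Real.log (eigenvals (τ x) j)) := by
          simp only [tiltedSecondMoment, Fintype.sum_prod_type, mul_assoc, neg_sq, abs_neg,
            Finset.mul_sum]
      _ ≤ ∑ x, P x * (16 * Fintype.card d) := by
          gcongr with x
          · exact hP x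
          · exact tiltedSecondMoment_log_eigenvals_le (hτ x)
      _ = _ := by rw [← Finset.sum_mul, hP1, one_mul]
  · have hne' : ∀ i, eigenvals (τ (y i).1) (y i).2 ≠ 0 := fun i => right_ne_zero_of_mul (hne i)
    have hlog := Real.log_lt_log
      (Finset.prod_pos fun i _ => (nonneg _ _).lt_of_ne' (hne' i)) hy
    rw [Real.log_exp, Real.log_prod fun i _ => hne' i] at hlog
    have mean : ∑ a : X × d, P a.1 * eigenvals (τ a.1) a.2 * -Real.log (eigenvals (τ a.1) a.2)
        = ∑ x, P x * vonNeumannEntropy (τ x) := by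
      simp only [Fintype.sum_prod_type, mul_assoc, ← Finset.mul_sum, mul_neg,
        Finset.sum_neg_distrib, sum_eigenvals_mul_log, neg_neg]
    rw [mean, Finset.sum_const, Finset.card_univ, nsmul_eq_mul, Finset.sum_neg_distrib]
    linarith

lemma sum_prod_mul_reTrace_one_sub_largeWeightProj_le [Nonempty d] {P : X → ℝ}
    (hP : ∀ x, 0 ≤ P x) (hP1 : ∑ x, P x = 1) {τ : X → Matrix d d ℂ} (hτ : ∀ x, IsDensity (τ x))
    {δ : ℝ} (hδ : 0 < δ) :
    ∑ x : k → X, (∏ i, P (x i)) *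
        reTrace ((1 - largeWeightProj (fun i => eigenbasis (τ (x i))) (fun i => eigenvals (τ (x i)))
          (Fintype.card k * (∑ x, P x * vonNeumannEntropy (τ x) + δ))) * tensorFam fun i => τ (x i))
      ≤ Real.exp (-(Fintype.card k * chernoffRate δ (16 * Fintype.card d))) := by
  refine le_trans (le_of_eq ?_) (sum_indicator_joint_eigenvals_le hP hP1 hτ hδ)
  rw [← (Equiv.arrowProdEquivProdArrow k (fun _ => X) (fun _ => d)).symm.sum_comp,
    Fintype.sum_prod_type]
  refine Finset.sum_congr rfl fun x _ => ?_
  rw [largeWeightProj, reTrace_one_sub_spectralProj_mul, Finset.mul_sum]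
  refine Finset.sum_congr rfl fun j _ => ?_
  rw [diagInBasis_tensorFam _ fun i => (hτ _).nonneg]
  simp only [diagInBasis_eigenbasis (hτ _).isHermitian, Equiv.arrowProdEquivProdArrow,
    Finset.prod_mul_distrib, Set.indicator, Set.mem_compl_iff, Set.mem_ofPred_eq, not_le]
  exact mul_left_comm _ _ _

end TypicalProjections

/-! ### The test for a memoryless channel -/

section TypicalTest

open scoped MatrixOrder
open Matrix

variable {k : Type*} [Fintype k] [DecidableEq k] {d : Type*} [Fintype d] [DecidableEq d]
  {X : Type*} [Fintype X]

/-- The projection onto the typical subspace of the average output state `∑ x, P x • τ x`. -/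
def averageTypicalProj (P : X → ℝ) (τ : X → Matrix d d ℂ) (δ : ℝ) : Matrix (k → d) (k → d) ℂ :=
  smallWeightProj (fun _ => eigenbasis (∑ x, P x • τ x)) (fun _ => eigenvals (∑ x, P x • τ x))
    (Fintype.card k * (vonNeumannEntropy (∑ x, P x • τ x) - δ))

/-- The projection onto the conditionally typical subspace of the output of the word `x`. -/
def conditionalTypicalProj (P : X → ℝ) (τ : X → Matrix d d ℂ) (δ : ℝ) (x : k → X) :
    Matrix (k → d) (k → d) ℂ :=
  largeWeightProj (fun i => eigenbasis (τ (x i))) (fun i => eigenvals (τ (x i)))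
    (Fintype.card k * (∑ x, P x * vonNeumannEntropy (τ x) + δ))

/-- The test deciding whether the word `x` was sent through the memoryless channel `τ`, for
codewords drawn independently with letter distribution `P`. -/
def typicalTest (P : X → ℝ) (τ : X → Matrix d d ℂ) (δ : ℝ) (x : k → X) :
    Matrix (k → d) (k → d) ℂ :=
  averageTypicalProj P τ δ * conditionalTypicalProj P τ δ x * averageTypicalProj P τ δ

lemma isStarProjection_averageTypicalProj (P : X → ℝ) (τ : X → Matrix d d ℂ) (δ : ℝ) :
    IsStarProjection (averageTypicalProj (k := k) P τ δ) :=
  isStarProjection_smallWeightProj _ _ _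

lemma isStarProjection_conditionalTypicalProj (P : X → ℝ) (τ : X → Matrix d d ℂ) (δ : ℝ)
    (x : k → X) : IsStarProjection (conditionalTypicalProj P τ δ x) :=
  isStarProjection_largeWeightProj _ _ _

lemma typicalTest_nonneg (P : X → ℝ) (τ : X → Matrix d d ℂ) (δ : ℝ) (x : k → X) :
    0 ≤ typicalTest P τ δ x :=
  nonneg_conj_of_isHermitian (isStarProjection_conditionalTypicalProj P τ δ x).nonneg
    (isStarProjection_averageTypicalProj P τ δ).isSelfAdjoint

lemma typicalTest_le_one (P : X → ℝ) (τ : X → Matrix d d ℂ) (δ : ℝ) (x : k → X) :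
    typicalTest P τ δ x ≤ 1 := by
  have hproj := isStarProjection_averageTypicalProj (k := k) P τ δ
  calc typicalTest P τ δ x ≤ averageTypicalProj P τ δ * 1 * averageTypicalProj P τ δ :=
        conj_le_conj_of_isHermitian (isStarProjection_conditionalTypicalProj P τ δ x).le_one
          hproj.isSelfAdjoint
    _ ≤ 1 := by rw [mul_one, hproj.isIdempotentElem.eq]; exact hproj.le_one

variable {P : X → ℝ} {τ : X → Matrix d d ℂ} {δ : ℝ}

lemma conditionalTypicalProj_le (hτ : ∀ x, IsDensity (τ x)) (x : k → X) :
    conditionalTypicalProj P τ δ x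
      ≤ Real.exp (Fintype.card k * (∑ x, P x * vonNeumannEntropy (τ x) + δ))
        • tensorFam fun i => τ (x i) := by
  have h := largeWeightProj_le (fun i => eigenbasis (τ (x i)))
    (fun i => eigenvals_nonneg (hτ (x i)).nonneg)
    (Fintype.card k * (∑ x, P x * vonNeumannEntropy (τ x) + δ))
  simpa only [conditionalTypicalProj, unitaryDiagonal_eigenvals (hτ _).isHermitian] using h

lemma averageTypicalProj_conj_le (hP : ∀ x, 0 ≤ P x) (hP1 : ∑ x, P x = 1)
    (hτ : ∀ x, IsDensity (τ x)) (δ : ℝ) :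
    averageTypicalProj P τ δ * (tensorFam fun _ : k => ∑ x, P x • τ x) * averageTypicalProj P τ δ
      ≤ Real.exp (-(Fintype.card k * (vonNeumannEntropy (∑ x, P x • τ x) - δ)))
        • (1 : Matrix (k → d) (k → d) ℂ) := by
  have hσ : IsDensity (∑ x, P x • τ x) := isDensity_sum_smul (fun x _ => hP x) hP1 fun x _ => hτ x
  have h := smallWeightProj_conj_tensorFam_le (fun _ : k => eigenbasis (∑ x, P x • τ x))
    (fun _ => eigenvals (∑ x, P x • τ x))
    (Fintype.card k * (vonNeumannEntropy (∑ x, P x • τ x) - δ))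
  simpa only [averageTypicalProj, unitaryDiagonal_eigenvals hσ.isHermitian] using h

theorem sum_prod_smul_typicalTest_le (hP : ∀ x, 0 ≤ P x) (hP1 : ∑ x, P x = 1)
    (hτ : ∀ x, IsDensity (τ x)) (δ : ℝ) :
    ∑ x : k → X, (∏ i, P (x i)) • typicalTest P τ δ x
      ≤ Real.exp (-(Fintype.card k * (holevoInfo P τ - 2 * δ))) •
        (1 : Matrix (k → d) (k → d) ℂ) := by
  set Pσ := averageTypicalProj (k := k) P τ δ
  set b := Real.exp (Fintype.card k * (∑ x, P x * vonNeumannEntropy (τ x) + δ)) with hb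
  calc ∑ x : k → X, (∏ i, P (x i)) • typicalTest P τ δ x
      ≤ ∑ x : k → X, (∏ i, P (x i)) • (Pσ * (b • tensorFam fun i => τ (x i)) * Pσ) := by
        refine Finset.sum_le_sum fun x _ => smul_le_smul_of_nonneg_left ?_
          (Finset.prod_nonneg fun i _ => hP _)
        exact conj_le_conj_of_isHermitian (conditionalTypicalProj_le hτ x)
          (isStarProjection_averageTypicalProj P τ δ).isSelfAdjoint
    _ = b • (Pσ * (tensorFam fun _ : k => ∑ x, P x • τ x) * Pσ) := by
        simp only [tensorFam_iid_sum_smul, Finset.mul_sum, Finset.sum_mul, Finset.smul_sum,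
          mul_smul_comm, smul_mul_assoc, smul_comm b]
    _ ≤ b • Real.exp (-(Fintype.card k * (vonNeumannEntropy (∑ x, P x • τ x) - δ))) • 1 :=
        smul_le_smul_of_nonneg_left (averageTypicalProj_conj_le hP hP1 hτ δ) (Real.exp_pos _).le
    _ = _ := by
        rw [smul_smul, hb, ← Real.exp_add, holevoInfo]
        ring_nf

lemma sum_prod_mul_reTrace_one_sub_averageTypicalProj_le [Nonempty d] (hP : ∀ x, 0 ≤ P x)
    (hP1 : ∑ x, P x = 1) (hτ : ∀ x, IsDensity (τ x)) (hδ : 0 < δ) :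
    ∑ x : k → X, (∏ i, P (x i)) *
        reTrace ((1 - averageTypicalProj P τ δ) * tensorFam fun i => τ (x i))
      ≤ Real.exp (-(Fintype.card k * chernoffRate δ (16 * Fintype.card d))) := by
  have hσ : IsDensity (∑ x, P x • τ x) := isDensity_sum_smul (fun x _ => hP x) hP1 fun x _ => hτ x
  have h := reTrace_one_sub_smallWeightProj_le (fun _ : k => hσ) hδ
  rw [Finset.sum_const, Finset.card_univ, nsmul_eq_mul, ← mul_sub, tensorFam_iid_sum_smul,
    Finset.mul_sum, map_sum] at h
  simpa only [averageTypicalProj, mul_smul_comm, map_smul, smul_eq_mul] using h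

theorem sum_prod_mul_reTrace_one_sub_typicalTest_le [Nonempty d] (hP : ∀ x, 0 ≤ P x)
    (hP1 : ∑ x, P x = 1) (hτ : ∀ x, IsDensity (τ x)) (hδ : 0 < δ) :
    ∑ x : k → X, (∏ i, P (x i)) * reTrace ((1 - typicalTest P τ δ x) * tensorFam fun i => τ (x i))
      ≤ 4 * Real.exp (-(Fintype.card k * (chernoffRate δ (16 * Fintype.card d) / 2))) := by
  set r := chernoffRate δ (16 * Fintype.card d) with hr
  set q := Real.exp (-(Fintype.card k * (r / 2))) with hq
  have q_pos : 0 < q := Real.exp_pos _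
  have q_le_one : q ≤ 1 := by
    have r_pos : 0 < r := chernoffRate_pos hδ (by positivity)
    rw [hq, Real.exp_le_one_iff, neg_nonpos]
    positivity
  have exp_eq : Real.exp (-(Fintype.card k * r)) = q * q := by
    rw [hq, ← Real.exp_add]; ring_nf
  have haverage := sum_prod_mul_reTrace_one_sub_averageTypicalProj_le (k := k) hP hP1 hτ hδ
  have hconditional := sum_prod_mul_reTrace_one_sub_largeWeightProj_le (k := k) hP hP1 hτ hδ
  rw [← hr, exp_eq] at haverage hconditional
  calc _ ≤ ∑ x : k → X, (∏ i, P (x i)) *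
        (reTrace ((1 - conditionalTypicalProj P τ δ x) * tensorFam fun i => τ (x i)) + q
          + (1 + q⁻¹) * reTrace ((1 - averageTypicalProj P τ δ) * tensorFam fun i => τ (x i))) := by
        refine Finset.sum_le_sum fun x _ => mul_le_mul_of_nonneg_left ?_
          (Finset.prod_nonneg fun i _ => hP _)
        have hQ := isStarProjection_conditionalTypicalProj P τ δ x
        exact reTrace_one_sub_conj_mul_le (isStarProjection_averageTypicalProj P τ δ) hQ.nonneg
          hQ.le_one (isDensity_tensorFam fun i => hτ (x i)) q_pos
    _ = ∑ x : k → X, (∏ i, P (x i)) *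
            reTrace ((1 - conditionalTypicalProj P τ δ x) * tensorFam fun i => τ (x i)) + q
          + (1 + q⁻¹) * ∑ x : k → X, (∏ i, P (x i)) *
            reTrace ((1 - averageTypicalProj P τ δ) * tensorFam fun i => τ (x i)) := by
        simp only [mul_add, Finset.sum_add_distrib, ← Finset.sum_mul, sum_prod_eq_one hP1, one_mul,
          Finset.mul_sum, mul_left_comm (1 + q⁻¹)]
    _ ≤ q * q + q + (1 + q⁻¹) * (q * q) := by
        gcongr
        exact hconditional
    _ = q * q + q + q * q + q := by field_simp; ring
    _ ≤ 4 * q := by nlinarith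

end TypicalTest

/-! ### Codes -/

/-- A code for a classical-quantum channel with input set `Y` and output space `ℂ ^ ι`: messages
in `μ` are encoded as inputs and decoded by a positive operator valued measure. -/
structure CQCode (Y ι μ : Type*) [Fintype ι] [DecidableEq ι] [Fintype μ] where
  encoder : μ → Y
  decoder : μ → Matrix ι ι ℂ
  posSemidef_decoder : ∀ m, (decoder m).PosSemidef
  sum_decoder : ∑ m, decoder m = 1

namespace CQCode

open scoped MatrixOrder
open Matrix

variable {Y ι μ : Type*} [Fintype ι] [DecidableEq ι] [Fintype μ]

/-- The error probability, averaged over uniformly distributed messages, of a code used on the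
channel `R`. -/
def avgError (C : CQCode Y ι μ) (R : Y → Matrix ι ι ℂ) : ℝ :=
  1 - (1 / Fintype.card μ) * ∑ m, reTrace (C.decoder m * R (C.encoder m))

lemma decoder_le_one (C : CQCode Y ι μ) (m : μ) : C.decoder m ≤ 1 := by
  rw [← C.sum_decoder]
  exact Finset.single_le_sum (fun i _ => nonneg_iff_posSemidef.2 (C.posSemidef_decoder i))
    (Finset.mem_univ m)

lemma avgError_sum_smul {σ : Type*} (C : CQCode Y ι μ) {S : Finset σ} {w : σ → ℝ}
    (hw : ∑ s ∈ S, w s = 1) (R : σ → Y → Matrix ι ι ℂ) :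
    C.avgError (fun y => ∑ s ∈ S, w s • R s y) = ∑ s ∈ S, w s * C.avgError (R s) := by
  simp only [avgError, mul_sub, mul_one, Finset.sum_sub_distrib, hw, Finset.mul_sum, map_sum,
    mul_smul_comm, map_smul, smul_eq_mul]
  rw [Finset.sum_comm]
  simp only [mul_left_comm]

variable [Nonempty μ]

lemma avgError_eq_sum_div (C : CQCode Y ι μ) {R : Y → Matrix ι ι ℂ} (hR : ∀ y, IsDensity (R y)) :
    C.avgError R
      = (∑ m, reTrace ((1 - C.decoder m) * R (C.encoder m))) / Fintype.card μ := by
  simp only [avgError, sub_mul, one_mul, map_sub, (hR _).reTrace_eq_one, Finset.sum_sub_distrib,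
    Finset.sum_const, Finset.card_univ, nsmul_eq_mul, mul_one]
  field_simp

lemma avgError_nonneg (C : CQCode Y ι μ) {R : Y → Matrix ι ι ℂ} (hR : ∀ y, IsDensity (R y)) :
    0 ≤ C.avgError R := by
  rw [C.avgError_eq_sum_div hR]
  exact div_nonneg (Finset.sum_nonneg fun m _ =>
    reTrace_mul_nonneg (sub_nonneg.2 (C.decoder_le_one m)) (hR _).nonneg) (Nat.cast_nonneg _)

lemma avgError_le_mul_of_le_smul (C : CQCode Y ι μ) {R R' : Y → Matrix ι ι ℂ}
    (hR : ∀ y, IsDensity (R y)) (hR' : ∀ y, IsDensity (R' y)) {c : ℝ} (hc : ∀ y, R y ≤ c • R' y) :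
    C.avgError R ≤ c * C.avgError R' := by
  rw [C.avgError_eq_sum_div hR, C.avgError_eq_sum_div hR', ← mul_div_assoc, Finset.mul_sum]
  gcongr with m
  refine (reTrace_mul_le_mul_left (hc _) (sub_nonneg.2 (C.decoder_le_one m))).trans_eq ?_
  rw [mul_smul_comm, map_smul, smul_eq_mul]

end CQCode

/-! ### Random codebooks -/

section ProductMarginals

variable {μ Y : Type*} [Fintype μ] [DecidableEq μ] [Fintype Y] {w : Y → ℝ}

lemma sum_prod_mul_apply_mul_apply (hw : ∑ y, w y = 1) {a b : μ} (hab : a ≠ b) (u v : Y → ℝ) :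
    ∑ F : μ → Y, (∏ m, w (F m)) * (u (F a) * v (F b))
      = (∑ y, w y * u y) * ∑ y, w y * v y := by
  have factor : ∀ F : μ → Y, (∏ m, w (F m)) * (u (F a) * v (F b))
      = ∏ m, w (F m) * (if m = a then u (F m) else if m = b then v (F m) else 1) := fun F => by
    rw [Finset.prod_mul_distrib, Finset.prod_eq_mul (f := fun m => ite (m = a) _ _) a b hab
      (fun m _ hm => by simp [hm.1, hm.2]) (by simp) (by simp)]
    simp [hab.symm]
  simp only [factor]
  rw [← Fintype.piFinset_univ, ← Finset.prod_univ_sum (fun _ => Finset.univ)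
    (fun m y => w y * (if m = a then u y else if m = b then v y else 1)),
    Finset.prod_eq_mul a b hab (fun m _ hm => by simp [hm.1, hm.2, hw]) (by simp) (by simp)]
  simp [hab.symm]

lemma sum_prod_mul_apply_apply (hw : ∑ y, w y = 1) {a b : μ} (hab : a ≠ b) (g : Y → Y → ℝ) :
    ∑ F : μ → Y, (∏ m, w (F m)) * g (F a) (F b) = ∑ y, w y * ∑ z, w z * g y z := by
  classical
  have expand : ∀ F : μ → Y, (∏ m, w (F m)) * g (F a) (F b)
      = ∑ y, (∏ m, w (F m)) * ((if F a = y then 1 else 0) * g y (F b)) := fun F => by simp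
  simp only [expand]
  rw [Finset.sum_comm]
  refine Finset.sum_congr rfl fun y _ => ?_
  rw [sum_prod_mul_apply_mul_apply hw hab (fun y' => if y' = y then 1 else 0)]
  simp

lemma sum_prod_mul_apply (hw : ∑ y, w y = 1) (a : μ) (g : Y → ℝ) :
    ∑ F : μ → Y, (∏ m, w (F m)) * g (F a) = ∑ y, w y * g y := by
  have factor : ∀ F : μ → Y, (∏ m, w (F m)) * g (F a)
      = ∏ m, w (F m) * (if m = a then g (F m) else 1) := fun F => by
    rw [Finset.prod_mul_distrib, Finset.prod_ite_eq' Finset.univ a, if_pos (Finset.mem_univ a)]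
  simp only [factor]
  rw [← Fintype.piFinset_univ, ← Finset.prod_univ_sum (fun _ => Finset.univ)
    (fun m y => w y * (if m = a then g y else 1)),
    Finset.prod_eq_single a (fun m _ hm => by simp [hm, hw]) (by simp)]
  simp

lemma exists_le_of_sum_mul_le {α : Type*} [Fintype α] {w f : α → ℝ} (hw : ∀ a, 0 ≤ w a)
    (hw1 : ∑ a, w a = 1) {B : ℝ} (h : ∑ a, w a * f a ≤ B) : ∃ a, f a ≤ B := by
  by_contra! hlt
  obtain ⟨a, -, ha⟩ := Finset.exists_ne_zero_of_sum_ne_zero (hw1.trans_ne one_ne_zero)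
  refine h.not_gt ?_
  calc B = ∑ a, w a * B := by rw [← Finset.sum_mul, hw1, one_mul]
    _ < ∑ a, w a * f a := Finset.sum_lt_sum
        (fun b _ => mul_le_mul_of_nonneg_left (hlt b).le (hw b))
        ⟨a, Finset.mem_univ a, mul_lt_mul_of_pos_left (hlt a) ((hw a).lt_of_ne' ha)⟩

end ProductMarginals

section RandomCodebook

open scoped MatrixOrder
open Matrix

variable {Y ι μ : Type*} [Fintype Y] [Fintype ι] [DecidableEq ι] [Fintype μ]
  {w : Y → ℝ} {W : Y → Matrix ι ι ℂ} {ε₁ ε₂ : ℝ}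

lemma sum_mul_sum_mul_reTrace_le (hw : ∀ y, 0 ≤ w y) (hw1 : ∑ y, w y = 1)
    (hW : ∑ y, w y • W y ≤ ε₂ • (1 : Matrix ι ι ℂ)) {R : Y → Matrix ι ι ℂ}
    (hR : ∀ y, IsDensity (R y)) :
    ∑ y, w y * ∑ z, w z * reTrace (W z * R y) ≤ ε₂ := by
  calc ∑ y, w y * ∑ z, w z * reTrace (W z * R y)
      = ∑ y, w y * reTrace ((∑ z, w z • W z) * R y) := by
        simp only [Finset.sum_mul, map_sum, smul_mul_assoc, map_smul, smul_eq_mul]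
    _ ≤ ∑ y, w y * ε₂ := by
        gcongr with y
        · exact hw y
        · refine (reTrace_mul_le_mul_right hW (hR y).nonneg).trans_eq ?_
          rw [smul_mul_assoc, one_mul, map_smul, (hR y).reTrace_eq_one, smul_eq_mul, mul_one]
    _ = ε₂ := by rw [← Finset.sum_mul, hw1, one_mul]

lemma sum_prod_mul_reTrace_one_sub_decoder_le [DecidableEq μ] (hw : ∀ y, 0 ≤ w y)
    (hw1 : ∑ y, w y = 1) (hε₂ : 0 ≤ ε₂) (hW : ∑ y, w y • W y ≤ ε₂ • (1 : Matrix ι ι ℂ))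
    {R : Y → Matrix ι ι ℂ} (hR : ∀ y, IsDensity (R y))
    (hWR : ∑ y, w y * reTrace ((1 - W y) * R y) ≤ ε₁)
    {η : ℝ} {m : μ} {D : (μ → Y) → Matrix ι ι ℂ}
    (hD : ∀ F, 1 - D F
      ≤ (2 : ℝ) • (1 - W (F m)) + (4 : ℝ) • (∑ m' ∈ Finset.univ.erase m, W (F m') + η • 1)) :
    ∑ F : μ → Y, (∏ m, w (F m)) * reTrace ((1 - D F) * R (F m))
      ≤ 2 * ε₁ + 4 * Fintype.card μ * ε₂ + 4 * η := by
  have pointwise : ∀ F, reTrace ((1 - D F) * R (F m)) ≤ 2 * reTrace ((1 - W (F m)) * R (F m))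
      + 4 * ∑ m' ∈ Finset.univ.erase m, reTrace (W (F m') * R (F m)) + 4 * η := fun F => by
    refine (reTrace_mul_le_mul_right (hD F) (hR _).nonneg).trans_eq ?_
    simp only [add_mul, smul_mul_assoc, map_add, map_smul, smul_eq_mul, Finset.sum_mul, map_sum,
      one_mul, (hR _).reTrace_eq_one]
    ring
  calc _ ≤ ∑ F : μ → Y, (∏ m, w (F m)) * (2 * reTrace ((1 - W (F m)) * R (F m))
          + 4 * ∑ m' ∈ Finset.univ.erase m, reTrace (W (F m') * R (F m)) + 4 * η) :=
        Finset.sum_le_sum fun F _ => mul_le_mul_of_nonneg_left (pointwise F)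
          (Finset.prod_nonneg fun m _ => hw _)
    _ = 2 * ∑ F : μ → Y, (∏ m, w (F m)) * reTrace ((1 - W (F m)) * R (F m))
          + 4 * ∑ m' ∈ Finset.univ.erase m,
            ∑ F : μ → Y, (∏ m, w (F m)) * reTrace (W (F m') * R (F m)) + 4 * η := by
        simp only [mul_add, Finset.sum_add_distrib, ← Finset.sum_mul, sum_prod_eq_one hw1, one_mul]
        rw [Finset.sum_comm]
        simp only [Finset.mul_sum, mul_left_comm]
    _ = 2 * ∑ y, w y * reTrace ((1 - W y) * R y)
          + 4 * ∑ _ ∈ Finset.univ.erase m, ∑ y, w y * ∑ z, w z * reTrace (W z * R y)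
          + 4 * η := by
        rw [sum_prod_mul_apply hw1 m fun y => reTrace ((1 - W y) * R y),
          Finset.sum_congr rfl fun m' hm' => sum_prod_mul_apply_apply hw1
            (Finset.ne_of_mem_erase hm').symm fun y z => reTrace (W z * R y)]
    _ ≤ 2 * ε₁ + 4 * ∑ _ ∈ Finset.univ.erase m, ε₂ + 4 * η := by
        gcongr
        exact sum_mul_sum_mul_reTrace_le hw hw1 hW hR
    _ ≤ 2 * ε₁ + 4 * (Fintype.card μ * ε₂) + 4 * η := by
        rw [Finset.sum_const, nsmul_eq_mul]
        gcongr
        exact Finset.card_le_univ _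
    _ = _ := by ring

theorem exists_code_of_test [Nonempty μ] {Θ : Type*} [Fintype Θ] (hw : ∀ y, 0 ≤ w y)
    (hw1 : ∑ y, w y = 1) (hW0 : ∀ y, 0 ≤ W y) (hW1 : ∀ y, W y ≤ 1) (hε₂ : 0 ≤ ε₂)
    (hW : ∑ y, w y • W y ≤ ε₂ • (1 : Matrix ι ι ℂ)) {R : Θ → Y → Matrix ι ι ℂ}
    (hR : ∀ t y, IsDensity (R t y)) (hWR : ∀ t, ∑ y, w y * reTrace ((1 - W y) * R t y) ≤ ε₁)
    {η : ℝ} (hη : 0 < η) :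
    ∃ C : CQCode Y ι μ, ∀ t, C.avgError (R t)
      ≤ Fintype.card Θ * (2 * ε₁ + 4 * Fintype.card μ * ε₂ + 4 * η) := by
  classical
  choose D hD0 hD1 hD using fun F : μ → Y =>
    exists_square_root_measurement (fun m => hW0 (F m)) (fun m => hW1 (F m)) hη
  let code (F : μ → Y) : CQCode Y ι μ :=
    ⟨F, D F, fun m => nonneg_iff_posSemidef.1 (hD0 F m), hD1 F⟩
  set B := 2 * ε₁ + 4 * Fintype.card μ * ε₂ + 4 * η
  have mean_le : ∀ t, ∑ F : μ → Y, (∏ m, w (F m)) * (code F).avgError (R t) ≤ B := fun t => by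
    calc _ = (∑ m, ∑ F : μ → Y, (∏ m, w (F m)) * reTrace ((1 - D F m) * R t (F m)))
            / Fintype.card μ := by
          simp only [(code _).avgError_eq_sum_div (hR t), mul_div_assoc', ← Finset.sum_div,
            Finset.mul_sum, code]
          rw [Finset.sum_comm]
      _ ≤ (∑ _ : μ, B) / Fintype.card μ := by
          gcongr with m
          exact sum_prod_mul_reTrace_one_sub_decoder_le hw hw1 hε₂ hW (hR t) (hWR t)
            fun F => hD F m
      _ = B := by
          rw [Finset.sum_const, Finset.card_univ, nsmul_eq_mul]
          field_simp
  have total_le : ∑ F : μ → Y, (∏ m, w (F m)) * ∑ t, (code F).avgError (R t)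
      ≤ Fintype.card Θ * B := by
    calc _ = ∑ t, ∑ F : μ → Y, (∏ m, w (F m)) * (code F).avgError (R t) := by
          simp only [Finset.mul_sum]
          rw [Finset.sum_comm]
      _ ≤ ∑ _ : Θ, B := Finset.sum_le_sum fun t _ => mean_le t
      _ = _ := by rw [Finset.sum_const, Finset.card_univ, nsmul_eq_mul]
  obtain ⟨F, hF⟩ := exists_le_of_sum_mul_le
    (fun F => Finset.prod_nonneg fun m _ => hw (F m)) (sum_prod_eq_one hw1) total_le
  exact ⟨code F, fun t => (Finset.single_le_sum (fun t _ => (code F).avgError_nonneg (hR t))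
    (Finset.mem_univ t)).trans hF⟩

end RandomCodebook

/-! ### Codes for compound channels -/

section Compound

open scoped MatrixOrder
open Matrix

variable {k d X Θ μ : Type*} [Fintype k] [DecidableEq k] [Fintype d] [DecidableEq d] [Fintype X]
  [Fintype Θ] {P : X → ℝ} {τ : Θ → X → Matrix d d ℂ} {δ c : ℝ}

/-- The test whether `x` was sent through some member of the compound channel `τ`: a soft version
of the union of the tests for the individual channels. -/
def compoundTest (P : X → ℝ) (τ : Θ → X → Matrix d d ℂ) (δ c : ℝ) (x : k → X) :
    Matrix (k → d) (k → d) ℂ :=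
  softSupport (∑ t, typicalTest P (τ t) δ x) c

lemma sum_typicalTest_nonneg (P : X → ℝ) (τ : Θ → X → Matrix d d ℂ) (δ : ℝ) (x : k → X) :
    0 ≤ ∑ t, typicalTest P (τ t) δ x :=
  Finset.sum_nonneg fun t _ => typicalTest_nonneg P (τ t) δ x

lemma sum_prod_smul_compoundTest_le (hP : ∀ x, 0 ≤ P x) (hP1 : ∑ x, P x = 1)
    (hτ : ∀ t x, IsDensity (τ t x)) (hc : 0 < c) {I : ℝ} (hI : ∀ t, I ≤ holevoInfo P (τ t)) :
    ∑ x : k → X, (∏ i, P (x i)) • compoundTest P τ δ c x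
      ≤ (Fintype.card Θ / c * Real.exp (-(Fintype.card k * (I - 2 * δ))))
        • (1 : Matrix (k → d) (k → d) ℂ) := by
  have single_le : ∀ t, ∑ x : k → X, (∏ i, P (x i)) • typicalTest P (τ t) δ x
      ≤ Real.exp (-(Fintype.card k * (I - 2 * δ))) • 1 := fun t =>
    (sum_prod_smul_typicalTest_le hP hP1 (hτ t) δ).trans
      (smul_le_smul_of_nonneg_right (by have := hI t; gcongr) zero_le_one)
  calc ∑ x : k → X, (∏ i, P (x i)) • compoundTest P τ δ c x
      ≤ ∑ x : k → X, (∏ i, P (x i)) • c⁻¹ • ∑ t, typicalTest P (τ t) δ x := by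
        refine Finset.sum_le_sum fun x _ => smul_le_smul_of_nonneg_left ?_
          (Finset.prod_nonneg fun i _ => hP _)
        exact (le_inv_smul_iff_of_pos hc).2
          (smul_softSupport_le (sum_typicalTest_nonneg P τ δ x) hc)
    _ = c⁻¹ • ∑ t, ∑ x : k → X, (∏ i, P (x i)) • typicalTest P (τ t) δ x := by
        rw [Finset.sum_comm]
        simp only [Finset.smul_sum, smul_comm c⁻¹]
    _ ≤ c⁻¹ • ∑ _ : Θ, Real.exp (-(Fintype.card k * (I - 2 * δ))) • 1 :=
        smul_le_smul_of_nonneg_left (Finset.sum_le_sum fun t _ => single_le t) (by positivity)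
    _ = _ := by
        rw [Finset.sum_const, Finset.card_univ, ← Nat.cast_smul_eq_nsmul ℝ, smul_smul, smul_smul,
          div_eq_inv_mul, mul_assoc]

lemma sum_prod_mul_reTrace_one_sub_compoundTest_le [Nonempty d] (hP : ∀ x, 0 ≤ P x)
    (hP1 : ∑ x, P x = 1) (hτ : ∀ t x, IsDensity (τ t x)) (hδ : 0 < δ) (hc : 0 < c) (t : Θ) :
    ∑ x : k → X, (∏ i, P (x i)) *
        reTrace ((1 - compoundTest P τ δ c x) * tensorFam fun i => τ t (x i))
      ≤ 4 * Real.exp (-(Fintype.card k * (chernoffRate δ (16 * Fintype.card d) / 2))) + c := by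
  have pointwise : ∀ x : k → X,
      reTrace ((1 - compoundTest P τ δ c x) * tensorFam fun i => τ t (x i))
        ≤ reTrace ((1 - typicalTest P (τ t) δ x) * tensorFam fun i => τ t (x i)) + c := fun x => by
    have hx : IsDensity (tensorFam fun i => τ t (x i)) := isDensity_tensorFam fun i => hτ t (x i)
    refine (reTrace_mul_le_mul_right (one_sub_softSupport_sum_le
      (fun t _ => typicalTest_nonneg P (τ t) δ x) (Finset.mem_univ t)
      (typicalTest_le_one P (τ t) δ x) hc) hx.nonneg).trans_eq ?_
    rw [add_mul, map_add, smul_mul_assoc, one_mul, map_smul, hx.reTrace_eq_one, smul_eq_mul,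
      mul_one]
  calc _ ≤ ∑ x : k → X, (∏ i, P (x i)) *
        (reTrace ((1 - typicalTest P (τ t) δ x) * tensorFam fun i => τ t (x i)) + c) :=
        Finset.sum_le_sum fun x _ => mul_le_mul_of_nonneg_left (pointwise x)
          (Finset.prod_nonneg fun i _ => hP _)
    _ = ∑ x : k → X, (∏ i, P (x i)) *
        reTrace ((1 - typicalTest P (τ t) δ x) * tensorFam fun i => τ t (x i)) + c := by
        simp only [mul_add, Finset.sum_add_distrib, ← Finset.sum_mul, sum_prod_eq_one hP1, one_mul]
    _ ≤ _ := by
        gcongr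
        exact sum_prod_mul_reTrace_one_sub_typicalTest_le hP hP1 (hτ t) hδ

theorem exists_code_compound [Nonempty d] [Fintype μ] [Nonempty μ] (hP : ∀ x, 0 ≤ P x)
    (hP1 : ∑ x, P x = 1) (hτ : ∀ t x, IsDensity (τ t x)) (hδ : 0 < δ) (hc : 0 < c) {I : ℝ}
    (hI : ∀ t, I ≤ holevoInfo P (τ t)) :
    ∃ C : CQCode (k → X) (k → d) μ, ∀ t, C.avgError (fun x => tensorFam fun i => τ t (x i))
      ≤ Fintype.card Θ * (8 * Real.exp (-(Fintype.card k
            * (chernoffRate δ (16 * Fintype.card d) / 2))) + 6 * c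
          + 4 * Fintype.card μ * (Fintype.card Θ / c)
            * Real.exp (-(Fintype.card k * (I - 2 * δ)))) := by
  obtain ⟨C, hC⟩ := exists_code_of_test (μ := μ)
    (fun x : k → X => Finset.prod_nonneg fun i _ => hP (x i)) (sum_prod_eq_one hP1)
    (fun x => softSupport_nonneg (sum_typicalTest_nonneg P τ δ x) hc)
    (fun x => softSupport_le_one (sum_typicalTest_nonneg P τ δ x) hc) (by positivity)
    (sum_prod_smul_compoundTest_le hP hP1 hτ hc hI)
    (fun t x => isDensity_tensorFam fun i => hτ t (x i))
    (sum_prod_mul_reTrace_one_sub_compoundTest_le hP hP1 hτ hδ hc) hc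
  exact ⟨C, fun t => (hC t).trans_eq (by ring)⟩

end Compound

/-! ### Random codes and robustification -/

/-- A random code: a probability distribution on a finite set `Γ` and, for each element of `Γ`, a
code. -/
structure RandomCode (Γ Y ι μ : Type*) [Fintype Γ] [Fintype ι] [DecidableEq ι] [Fintype μ] where
  weight : Γ → ℝ
  weight_nonneg : ∀ γ, 0 ≤ weight γ
  sum_weight : ∑ γ, weight γ = 1
  code : Γ → CQCode Y ι μ

namespace RandomCode

open scoped MatrixOrder

variable {Γ Γ' Y ι μ : Type*} [Fintype Γ] [Fintype Γ'] [Fintype ι] [DecidableEq ι] [Fintype μ]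

/-- The expectation of the average error of a random code used on the channel `R`. -/
def avgError (C : RandomCode Γ Y ι μ) (R : Y → Matrix ι ι ℂ) : ℝ :=
  ∑ γ, C.weight γ * (C.code γ).avgError R

/-- The same random code with `Γ` relabelled along a bijection. -/
def reindex (C : RandomCode Γ Y ι μ) (e : Γ' ≃ Γ) : RandomCode Γ' Y ι μ where
  weight := C.weight ∘ e
  weight_nonneg γ := C.weight_nonneg (e γ)
  sum_weight := (e.sum_comp C.weight).trans C.sum_weight
  code := C.code ∘ e

lemma avgError_reindex (C : RandomCode Γ Y ι μ) (e : Γ' ≃ Γ) (R : Y → Matrix ι ι ℂ) :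
    (C.reindex e).avgError R = C.avgError R :=
  e.sum_comp fun γ => C.weight γ * (C.code γ).avgError R

lemma avgError_le_mul_of_le_smul [Nonempty μ] (C : RandomCode Γ Y ι μ) {R R' : Y → Matrix ι ι ℂ}
    (hR : ∀ y, IsDensity (R y)) (hR' : ∀ y, IsDensity (R' y)) {c : ℝ} (hc : ∀ y, R y ≤ c • R' y) :
    C.avgError R ≤ c * C.avgError R' := by
  unfold avgError
  rw [Finset.mul_sum]
  refine Finset.sum_le_sum fun γ _ => ?_
  rw [mul_left_comm]
  exact mul_le_mul_of_nonneg_left ((C.code γ).avgError_le_mul_of_le_smul hR hR' hc)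
    (C.weight_nonneg γ)

end RandomCode

section Robustification

open scoped MatrixOrder
open Matrix

variable {k d X S μ : Type*} [Fintype k]

lemma reindex_tensorFam_comp_perm (A : k → Matrix d d ℂ) (π : Equiv.Perm k) :
    reindex (π.arrowCongr (Equiv.refl d)) (π.arrowCongr (Equiv.refl d)) (tensorFam (A ∘ π))
      = tensorFam A := by
  ext j j'
  exact Fintype.prod_equiv π _ _ fun i => rfl

variable [Fintype d] [DecidableEq d] [Fintype μ]

lemma reTrace_reindex {ι ι' : Type*} [Fintype ι] [Fintype ι'] (e : ι ≃ ι') (A : Matrix ι ι ℂ) :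
    reTrace (reindex e e A) = reTrace A :=
  congrArg Complex.re (e.symm.sum_comp fun i => A i i)

variable [DecidableEq k]

lemma reTrace_reindexAlgEquiv_mul_tensorFam (B : Matrix (k → d) (k → d) ℂ) (A : k → Matrix d d ℂ)
    (π : Equiv.Perm k) :
    reTrace (reindexAlgEquiv ℂ ℂ (π.arrowCongr (Equiv.refl d)) B * tensorFam A)
      = reTrace (B * tensorFam (A ∘ π)) := by
  rw [← reindex_tensorFam_comp_perm A π, ← coe_reindexAlgEquiv ℂ ℂ, ← map_mul,
    coe_reindexAlgEquiv, reTrace_reindex]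

/-- The code using the letter positions of `C` in the order given by the permutation `π`. -/
def CQCode.permute (C : CQCode (k → X) (k → d) μ) (π : Equiv.Perm k) :
    CQCode (k → X) (k → d) μ where
  encoder m := C.encoder m ∘ π.symm
  decoder m := reindexAlgEquiv ℂ ℂ (π.arrowCongr (Equiv.refl d)) (C.decoder m)
  posSemidef_decoder m := by
    rw [coe_reindexAlgEquiv]
    exact (C.posSemidef_decoder m).submatrix _
  sum_decoder := by rw [← map_sum, C.sum_decoder, map_one]

lemma CQCode.avgError_permute (C : CQCode (k → X) (k → d) μ) (π : Equiv.Perm k)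
    (ρ : X → S → Matrix d d ℂ) (s : k → S) :
    (C.permute π).avgError (fun x => tensorFam fun i => ρ (x i) (s i))
      = C.avgError fun x => tensorFam fun i => ρ (x i) ((s ∘ π) i) := by
  unfold avgError
  congr 2
  refine Finset.sum_congr rfl fun m _ => ?_
  refine (reTrace_reindexAlgEquiv_mul_tensorFam _ _ π).trans ?_
  simp only [permute, Function.comp_def, Equiv.symm_apply_apply]

/-- The random code permuting the letter positions of `C` uniformly at random. -/
def CQCode.symmetrize (C : CQCode (k → X) (k → d) μ) :
    RandomCode (Equiv.Perm k) (k → X) (k → d) μ where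
  weight _ := ((Fintype.card k).factorial : ℝ)⁻¹
  weight_nonneg _ := by positivity
  sum_weight := by
    rw [Finset.sum_const, Finset.card_univ, Fintype.card_perm, nsmul_eq_mul, mul_inv_cancel₀]
    positivity
  code := C.permute

/-- Under the i.i.d. distribution `empiricalDist s`, the type class of `s` has probability at least
`(n + 1) ^ (-|S|)`, and the random permutation spreads the state sequence uniformly over it. -/
theorem CQCode.avgError_symmetrize_le [Nonempty k] [Fintype S] [DecidableEq S] [Nonempty μ]
    (C : CQCode (k → X) (k → d) μ) {ρ : X → S → Matrix d d ℂ} (hρ : ∀ x s, IsDensity (ρ x s))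
    (s : k → S) :
    C.symmetrize.avgError (fun x => tensorFam fun i => ρ (x i) (s i))
      ≤ ((Fintype.card k : ℝ) + 1) ^ Fintype.card S
        * C.avgError fun x => tensorFam fun i => ∑ a, empiricalDist s a • ρ (x i) a := by
  set err : (k → S) → ℝ := fun s' => C.avgError fun x => tensorFam fun i => ρ (x i) (s' i)
  have err_nonneg : ∀ s', 0 ≤ err s' := fun s' =>
    C.avgError_nonneg fun x => isDensity_tensorFam fun i => hρ (x i) (s' i)
  calc C.symmetrize.avgError (fun x => tensorFam fun i => ρ (x i) (s i))
      = (∑ π : Equiv.Perm k, err (s ∘ π)) / (Fintype.card k).factorial := by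
        simp only [RandomCode.avgError, symmetrize, avgError_permute]
        rw [← Finset.mul_sum, div_eq_inv_mul]
    _ ≤ ((Fintype.card k : ℝ) + 1) ^ Fintype.card S
          * ∑ s', (∏ i, empiricalDist s (s' i)) * err s' := sum_perm_div_factorial_le s err_nonneg
    _ = _ := by
        rw [← C.avgError_sum_smul (sum_prod_eq_one (sum_empiricalDist s))]
        congr 2
        ext x : 1
        rw [tensorFam_sum_smul (fun _ => Finset.univ) (fun _ => empiricalDist s)
          fun i => ρ (x i), Fintype.piFinset_univ]

end Robustification

/-! ### The direct part -/

section Direct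

open scoped MatrixOrder
open Matrix

theorem exists_randomCode_of_finite {k d S X μ : Type*} [Fintype X] {δ c I : ℝ} [Fintype k]
    [DecidableEq k] [Nonempty k] [Fintype d] [DecidableEq d] [Nonempty d] [Fintype S] [Fintype μ]
    [Nonempty μ]
    {P : X → ℝ} (hP : ∀ x, 0 ≤ P x) (hP1 : ∑ x, P x = 1) {ρ : X → S → Matrix d d ℂ}
    (hρ : ∀ x s, IsDensity (ρ x s)) (hδ : 0 < δ) (hc : 0 < c)
    (hI : ∀ q : S → ℝ, (∀ a, 0 ≤ q a) → ∑ a, q a = 1 →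
      I ≤ holevoInfo P fun x => ∑ a, q a • ρ x a) :
    ∃ C : RandomCode (Equiv.Perm k) (k → X) (k → d) μ, ∀ s : k → S,
      C.avgError (fun x => tensorFam fun i => ρ (x i) (s i))
        ≤ ((Fintype.card k : ℝ) + 1) ^ Fintype.card S
          * (((Fintype.card k : ℝ) + 1) ^ Fintype.card S
            * (8 * Real.exp (-(Fintype.card k * (chernoffRate δ (16 * Fintype.card d) / 2)))
              + 6 * c + 4 * Fintype.card μ
                * (((Fintype.card k : ℝ) + 1) ^ Fintype.card S / c)
                * Real.exp (-(Fintype.card k * (I - 2 * δ))))) := by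
  classical
  let Θ := {t // t ∈ (Finset.univ : Finset S).piAntidiag (Fintype.card k)}
  let q (t : Θ) (a : S) : ℝ := t.1 a / Fintype.card k
  have q_nonneg : ∀ t a, 0 ≤ q t a := fun t a => by positivity
  have sum_q : ∀ t, ∑ a, q t a = 1 := fun t => by
    rw [← Finset.sum_div, ← Nat.cast_sum, (Finset.mem_piAntidiag.1 t.2).1, div_self]
    exact_mod_cast Fintype.card_ne_zero
  have card_le : (Fintype.card Θ : ℝ) ≤ ((Fintype.card k : ℝ) + 1) ^ Fintype.card S := by
    rw [Fintype.card_coe]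
    exact_mod_cast card_piAntidiag_univ_le (S := S) (Fintype.card k)
  obtain ⟨C, hC⟩ := exists_code_compound (k := k) (μ := μ) hP hP1
    (τ := fun t x => ∑ a, q t a • ρ x a)
    (fun t x => isDensity_sum_smul (fun a _ => q_nonneg t a) (sum_q t) fun a _ => hρ x a) hδ hc
    fun t => hI (q t) (q_nonneg t) (sum_q t)
  refine ⟨C.symmetrize, fun s => (C.avgError_symmetrize_le hρ s).trans ?_⟩
  have type_mem : letterCount s ∈ (Finset.univ : Finset S).piAntidiag (Fintype.card k) :=
    Finset.mem_piAntidiag.2 ⟨sum_letterCount s, fun _ _ => Finset.mem_univ _⟩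
  refine mul_le_mul_of_nonneg_left ((hC ⟨letterCount s, type_mem⟩).trans ?_) (by positivity)
  gcongr

lemma exists_averagedState_eq_sum_smul {𝒳 𝒮 S : Type*} [Fintype S] {d : ℕ}
    (ρ : 𝒳 → 𝒮 → Matrix (Fin d) (Fin d) ℂ) (v : S → 𝒮) {q : S → ℝ} (hq : ∀ a, 0 ≤ q a)
    (hq1 : ∑ a, q a = 1) :
    ∃ Q : FinProb 𝒮, averagedState ρ Q.1 = fun x => ∑ a, q a • ρ x (v a) := by
  classical
  refine ⟨⟨∑ a, Finsupp.single (v a) (q a), fun s => ?_, ?_⟩, funext fun x => ?_⟩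
  · rw [Finsupp.finsetSum_apply]
    exact Finset.sum_nonneg fun a _ => by rw [Finsupp.single_apply]; split_ifs <;> simp [hq a]
  · rw [← Finsupp.sum_finsetSum_index (fun _ => rfl) fun _ _ _ => rfl]
    simp [hq1]
  · rw [averagedState, ← Finsupp.sum_finsetSum_index (fun s => by simp) fun s a b => by
      rw [add_smul]]
    exact Finset.sum_congr rfl fun a _ => Finsupp.sum_single_index (by simp)

variable {𝒳 𝒮 : Type*} [Fintype 𝒳] [DecidableEq 𝒳] {d : ℕ} {ρ : 𝒳 → 𝒮 → Matrix (Fin d) (Fin d) ℂ}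
  {I : ℝ}

theorem exists_randomCode_of_forall_le_mutInfI [NeZero d] (hρ : ∀ x s, IsDensity (ρ x s))
    (P : ProbDist 𝒳) (hI : ∀ Q : FinProb 𝒮, I ≤ mutInfI ρ P.1 Q.1 * Real.log 2) {ε : ℝ}
    (hε : 0 ≤ ε) {S : Finset 𝒮}
    (hS : ∀ s : 𝒮, ∃ s' ∈ S, ∀ x : 𝒳, Loewner (ρ x s) ((1 + ε) • ρ x s')) {δ c : ℝ} (hδ : 0 < δ)
    (hc : 0 < c) (n M : ℕ) [NeZero n] [NeZero M] :
    ∃ C : RandomCode (Equiv.Perm (Fin n)) (Fin n → 𝒳) (Fin n → Fin d) (Fin M), ∀ s : Fin n → 𝒮,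
      C.avgError (fun x => tensorFam fun i => ρ (x i) (s i))
        ≤ (1 + ε) ^ n * (((n : ℝ) + 1) ^ S.card * (((n : ℝ) + 1) ^ S.card
          * (8 * Real.exp (-(n * (chernoffRate δ (16 * d) / 2))) + 6 * c
            + 4 * M * (((n : ℝ) + 1) ^ S.card / c) * Real.exp (-(n * (I - 2 * δ)))))) := by
  obtain ⟨C, hC⟩ := exists_randomCode_of_finite (k := Fin n) (μ := Fin M) P.2.1 P.2.2
    (ρ := fun x (s : S) => ρ x s) (fun x s => hρ x s) hδ hc (I := I) fun q hq hq1 => by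
      obtain ⟨Q, hQ⟩ := exists_averagedState_eq_sum_smul ρ ((↑) : S → 𝒮) hq hq1
      rw [← hQ, ← mutInfI_mul_log_two hρ P Q]
      exact hI Q
  simp only [Fintype.card_fin, Fintype.card_coe] at hC
  choose v hvS hv using hS
  refine ⟨C, fun s => ?_⟩
  have word_le : ∀ x : Fin n → 𝒳, tensorFam (fun i => ρ (x i) (s i))
      ≤ (1 + ε) ^ n • tensorFam fun i => ρ (x i) (v (s i)) := fun x => by
    have h := tensorFam_mono (fun i => (hρ (x i) (s i)).nonneg)
      fun i => Matrix.le_iff.2 (hv (s i) (x i))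
    rwa [tensorFam_smul, Fintype.card_fin] at h
  refine (C.avgError_le_mul_of_le_smul (fun x => isDensity_tensorFam fun i => hρ _ _)
    (fun x => isDensity_tensorFam fun i => hρ _ _) word_le).trans ?_
  exact mul_le_mul_of_nonneg_left (hC fun i => ⟨v (s i), hvS (s i)⟩) (by positivity)

lemma direct_error_bound_le {n m M : ℕ} {r r' I R : ℝ} (hr : 0 < r) (hrr' : r ≤ r')
    (hrI : r ≤ (I - R) / 4) (hM : M ≤ 2 * Real.exp (n * R)) :
    (1 + r / 2) ^ n * (((n : ℝ) + 1) ^ m * (((n : ℝ) + 1) ^ m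
        * (8 * Real.exp (-(n * r')) + 6 * Real.exp (-(n * r)) + 4 * M
          * (((n : ℝ) + 1) ^ m / Real.exp (-(n * r))) * Real.exp (-(n * (I - 2 * ((I - R) / 8)))))))
      ≤ 22 * ((n : ℝ) + 1) ^ (3 * m) * Real.exp (-(n * (r / 2))) := by
  set p := ((n : ℝ) + 1) ^ m with hp
  have one_le_p : 1 ≤ p := one_le_pow₀ (by linarith [n.cast_nonneg (α := ℝ)])
  have pow_le : (1 + r / 2) ^ n ≤ Real.exp (n * (r / 2)) := by
    rw [Real.exp_nat_mul, add_comm]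
    exact pow_le_pow_left₀ (by positivity) (Real.add_one_le_exp (r / 2)) n
  have exponent_le : n * R + n * r + -(n * (I - 2 * ((I - R) / 8))) ≤ -(n * r) := by
    have gap : 2 * r ≤ 3 / 4 * (I - R) := by linarith
    have := mul_le_mul_of_nonneg_left gap n.cast_nonneg (α := ℝ)
    linarith
  have third_le : 4 * M * (p / Real.exp (-(n * r))) * Real.exp (-(n * (I - 2 * ((I - R) / 8))))
      ≤ 8 * p * Real.exp (-(n * r)) := by
    calc _ ≤ 4 * (2 * Real.exp (n * R)) * (p / Real.exp (-(n * r)))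
          * Real.exp (-(n * (I - 2 * ((I - R) / 8)))) := by gcongr
      _ = 8 * p * Real.exp (n * R + n * r + -(n * (I - 2 * ((I - R) / 8)))) := by
          rw [Real.exp_add, Real.exp_add, Real.exp_neg (n * r)]
          field_simp
          ring
      _ ≤ _ := by gcongr
  calc _ ≤ Real.exp (n * (r / 2)) * (p * (p * (8 * (p * Real.exp (-(n * r)))
          + 6 * (p * Real.exp (-(n * r))) + 8 * p * Real.exp (-(n * r))))) := by
        gcongr
        · exact (Real.exp_le_exp.2 (by gcongr)).trans
            (le_mul_of_one_le_left (Real.exp_pos _).le one_le_p)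
        · exact le_mul_of_one_le_left (Real.exp_pos _).le one_le_p
    _ = 22 * p ^ 3 * Real.exp (n * (r / 2) + -(n * r)) := by rw [Real.exp_add]; ring
    _ = _ := by rw [hp, ← pow_mul, mul_comm m 3]; ring_nf

lemma tendsto_pow_mul_exp_neg_mul (m : ℕ) {r : ℝ} (hr : 0 < r) :
    Tendsto (fun n : ℕ => ((n : ℝ) + 1) ^ m * Real.exp (-(n * r))) atTop (nhds 0) := by
  have exp_lt_one : |Real.exp (-r)| < 1 := by
    rwa [abs_of_pos (Real.exp_pos _), Real.exp_lt_one_iff, neg_lt_zero]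
  have h := ((tendsto_pow_const_mul_const_pow_of_abs_lt_one m exp_lt_one).comp
    (tendsto_add_atTop_nat 1)).const_mul (Real.exp r)
  rw [mul_zero] at h
  refine h.congr fun n => ?_
  rw [Function.comp, ← Real.exp_nat_mul, mul_left_comm, ← Real.exp_add]
  push_cast
  ring_nf

/-- `R` is an achievable random code rate, in bits per channel use, of the arbitrarily varying
channel `ρ`. -/
def IsAchievableRate (ρ : 𝒳 → 𝒮 → Matrix (Fin d) (Fin d) ℂ) (R : ℝ) : Prop :=
  0 ≤ R ∧ ∀ β > (0 : ℝ), ∀ δ > (0 : ℝ), ∃ N : ℕ, ∀ n ≥ N, ∃ (M K : ℕ)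
    (C : RandomCode (Fin K) (Fin n → 𝒳) (Fin n → Fin d) (Fin M)),
    (1 / (n : ℝ)) * Real.logb 2 M > R - δ ∧
    (⨆ s : Fin n → 𝒮, C.avgError fun x => tensorFam fun i => ρ (x i) (s i)) < β

lemma le_logb_ceil_exp {n : ℕ} (hn : 0 < n) (R : ℝ) :
    R ≤ (1 / (n : ℝ)) * Real.logb 2 ⌈Real.exp (n * (R * Real.log 2))⌉₊ := by
  have hlog : n * (R * Real.log 2) ≤ Real.log ⌈Real.exp (n * (R * Real.log 2))⌉₊ :=
    (Real.le_log_iff_exp_le (by positivity)).2 (Nat.le_ceil _)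
  rw [Real.logb, one_div_mul_eq_div, le_div_iff₀ (by positivity),
    le_div_iff₀ (Real.log_pos one_lt_two)]
  linarith

theorem isAchievableRate_of_forall_le_mutInfI [NeZero d] [Nonempty 𝒮]
    (hρ : ∀ x s, IsDensity (ρ x s)) (hAss : AssumptionA ρ) (P : ProbDist 𝒳)
    (hI : ∀ Q : FinProb 𝒮, I ≤ mutInfI ρ P.1 Q.1 * Real.log 2) {R : ℝ} (hR0 : 0 ≤ R)
    (hR : R * Real.log 2 < I) : IsAchievableRate ρ R := by
  refine ⟨hR0, fun β hβ δ hδ => ?_⟩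
  set R₂ := R * Real.log 2
  have gap_pos : 0 < (I - R₂) / 8 := by linarith
  have d_pos : (0 : ℝ) < d := Nat.cast_pos.2 (NeZero.pos d)
  set r := min (chernoffRate ((I - R₂) / 8) (16 * d) / 2) ((I - R₂) / 4)
  have r_pos : 0 < r := lt_min (half_pos (chernoffRate_pos gap_pos (by positivity))) (by linarith)
  obtain ⟨S, hS⟩ := hAss (r / 2) (half_pos r_pos)
  have hlim := (tendsto_pow_mul_exp_neg_mul (3 * S.card) (half_pos r_pos)).const_mul 22
  rw [mul_zero] at hlim
  obtain ⟨N, hN⟩ := eventually_atTop.1 (hlim.eventually (gt_mem_nhds hβ))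
  refine ⟨max N 1, fun n hn => ?_⟩
  have n_pos : 0 < n := (le_max_right N 1).trans hn
  set M := ⌈Real.exp (n * R₂)⌉₊
  have : NeZero n := ⟨n_pos.ne'⟩
  have : NeZero M := ⟨(Nat.ceil_pos.2 (Real.exp_pos _)).ne'⟩
  have M_le : M ≤ 2 * Real.exp (n * R₂) := by
    have one_le : 1 ≤ Real.exp (n * R₂) :=
      Real.one_le_exp (mul_nonneg n.cast_nonneg (mul_nonneg hR0 (Real.log_nonneg one_le_two)))
    linarith [Nat.ceil_lt_add_one (Real.exp_pos (n * R₂)).le]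
  obtain ⟨C, hC⟩ := exists_randomCode_of_forall_le_mutInfI hρ P hI (half_pos r_pos).le hS gap_pos
    (Real.exp_pos (-(n * r))) n M
  refine ⟨M, _, C.reindex (Fintype.equivFin _).symm, ?_, ?_⟩
  · linarith [le_logb_ceil_exp n_pos R]
  · refine (ciSup_le fun s => ?_).trans_lt (hN n ((le_max_left N 1).trans hn))
    rw [C.avgError_reindex, ← mul_assoc]
    exact (hC s).trans (direct_error_bound_le r_pos (min_le_left _ _) (min_le_right _ _) M_le)

end Direct

/-! ### Success probability of a single codeword -/

section SingleCodeword

open scoped MatrixOrder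
open Matrix

variable {ι : Type*} [Fintype ι] {A D E P σ : Matrix ι ι ℂ}

lemma sub_conj_eq_conj_one_sub [DecidableEq ι] (hE : IsIdempotentElem E) (hEA : Commute E A) :
    A - E * A * E = (1 - E) * A * (1 - E) := by
  have conj_eq : E * A * E = E * A := by rw [mul_assoc, ← hEA.eq, ← mul_assoc, hE.eq]
  calc A - E * A * E = A - E * A - A * E + E * A * E := by rw [conj_eq, hEA.eq]; abel
    _ = _ := by noncomm_ring

lemma conj_le_of_commute (hE : IsStarProjection E) (hA : 0 ≤ A) (hEA : Commute E A) :
    E * A * E ≤ A := by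
  classical
  rw [← sub_nonneg, sub_conj_eq_conj_one_sub hE.isIdempotentElem hEA]
  exact nonneg_conj_of_isHermitian hA hE.one_sub.isSelfAdjoint

variable [DecidableEq ι]

lemma reTrace_mul_le_conj_add (hE : IsStarProjection E) (hA : 0 ≤ A) (hEA : Commute E A)
    (hD1 : D ≤ 1) : reTrace (D * A) ≤ reTrace (D * (E * A * E)) + reTrace ((1 - E) * A) := by
  have rest_le := reTrace_mul_le_mul_right hD1 (sub_nonneg.2 (conj_le_of_commute hE hA hEA))
  have rest_eq : reTrace (A - E * A * E) = reTrace ((1 - E) * A) := by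
    rw [sub_conj_eq_conj_one_sub hE.isIdempotentElem hEA, reTrace_mul_comm, ← mul_assoc,
      hE.one_sub.isIdempotentElem.eq]
  rw [mul_sub, map_sub, one_mul, rest_eq] at rest_le
  linarith

theorem reTrace_mul_le_of_projections (hE : IsStarProjection E) (hP : IsStarProjection P)
    (hA : 0 ≤ A) (hEA : Commute E A) (hD : 0 ≤ D) (hD1 : D ≤ 1) {a b : ℝ} (ha : 0 ≤ a)
    (hEAa : E * A * E ≤ a • 1) (hPσ : P ≤ b • σ) :
    reTrace (D * A)
      ≤ 2 * (a * b) * reTrace (D * σ) + reTrace ((1 - E) * A) + 2 * reTrace ((1 - P) * A) := by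
  set A' := E * A * E
  have A'_nonneg : 0 ≤ A' := nonneg_conj_of_isHermitian hA hE.isSelfAdjoint
  have A'_le : A' ≤ A := conj_le_of_commute hE hA hEA
  have pinched : reTrace (D * A')
      ≤ 2 * reTrace (P * D * P * A') + 2 * reTrace ((1 - P) * D * (1 - P) * A') := by
    have h := reTrace_mul_le_mul_right (le_pinching hD hP.isSelfAdjoint one_pos) A'_nonneg
    simpa only [add_mul, smul_mul_assoc, map_add, map_smul, smul_eq_mul, inv_one,
      one_add_one_eq_two] using h
  have inside : reTrace (P * D * P * A') ≤ a * b * reTrace (D * σ) :=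
    calc reTrace (P * D * P * A') ≤ reTrace (P * D * P * (a • 1)) :=
          reTrace_mul_le_mul_left hEAa (nonneg_conj_of_isHermitian hD hP.isSelfAdjoint)
      _ = a * reTrace (D * P) := by
          rw [mul_smul_comm, mul_one, map_smul, smul_eq_mul, mul_assoc, reTrace_mul_comm,
            mul_assoc, hP.isIdempotentElem.eq]
      _ ≤ a * reTrace (D * (b • σ)) :=
          mul_le_mul_of_nonneg_left (reTrace_mul_le_mul_left hPσ hD) ha
      _ = _ := by rw [mul_smul_comm, map_smul, smul_eq_mul, mul_assoc]
  have outside : reTrace ((1 - P) * D * (1 - P) * A') ≤ reTrace ((1 - P) * A) := by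
    refine (reTrace_mul_le_mul_right ?_ A'_nonneg).trans
      (reTrace_mul_le_mul_left A'_le hP.one_sub.nonneg)
    refine (conj_le_conj_of_isHermitian hD1 hP.one_sub.isSelfAdjoint).trans_eq ?_
    rw [mul_one, hP.one_sub.isIdempotentElem.eq]
  linarith [reTrace_mul_le_conj_add hE hA hEA hD1]

variable {k : Type*} [Fintype k] [DecidableEq k] {d : Type*} [Fintype d] [DecidableEq d]
  (U : unitaryGroup d ℂ)

/-- The relative entropy, in nats, of `A` with respect to `unitaryDiagonal U r` for `r > 0`. -/
def relEntDiag (r : d → ℝ) (A : Matrix d d ℂ) : ℝ :=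
  ∑ j, diagInBasis U A j * -Real.log (r j) - vonNeumannEntropy A

/-- Bound on the weight that a product of `n` states on `ℂ ^ d` has outside the projections of the
converse, with entropic slack `δ` and with the reference state having log-eigenvalues at least
`-L`. -/
def atypicalBound (n d : ℕ) (δ L : ℝ) : ℝ :=
  Real.exp (-(n * chernoffRate δ (16 * d)))
    + 2 * Real.exp (-(n * chernoffRate δ (L ^ 2 * Real.exp L)))

lemma atypicalBound_nonneg (n d : ℕ) (δ L : ℝ) : 0 ≤ atypicalBound n d δ L := by
  unfold atypicalBound; positivity

variable {r : d → ℝ} {L δ : ℝ} {τ : k → Matrix d d ℂ}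

lemma reTrace_one_sub_largeWeightProj_le (hr : ∀ j, 0 < r j) (hL : 0 < L)
    (hrL : ∀ j, |Real.log (r j)| ≤ L) (hτ : ∀ i, IsDensity (τ i)) (hδ : 0 < δ) :
    reTrace ((1 - largeWeightProj (fun _ => U) (fun _ => r)
        (∑ i, ∑ j, diagInBasis U (τ i) j * -Real.log (r j) + Fintype.card k * δ)) * tensorFam τ)
      ≤ Real.exp (-(Fintype.card k * chernoffRate δ (L ^ 2 * Real.exp L))) := by
  have weight_sum : ∀ i, ∑ j, diagInBasis U (τ i) j = 1 := fun i => by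
    rw [sum_diagInBasis, (hτ i).reTrace_eq_one]
  have weight_nonneg : ∀ i j, 0 ≤ diagInBasis U (τ i) j := fun i =>
    diagInBasis_nonneg U (hτ i).nonneg
  rw [largeWeightProj, reTrace_one_sub_spectralProj_mul]
  simp only [diagInBasis_tensorFam _ fun i => (hτ i).nonneg]
  refine chernoff_bound (Z := fun _ j => -Real.log (r j)) weight_nonneg weight_sum (by positivity)
    hδ (fun i => tiltedSecondMoment_le_of_abs_le (weight_nonneg i) (weight_sum i) fun j => ?_)
    fun j hj _ => ?_
  · rw [abs_neg]
    exact hrL j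
  · rw [Set.mem_compl_iff, Set.mem_ofPred_eq, not_le] at hj
    have hlog := Real.log_lt_log (Finset.prod_pos fun i _ => hr (j i)) hj
    rw [Real.log_exp, Real.log_prod fun i _ => (hr (j i)).ne'] at hlog
    rw [Finset.sum_neg_distrib]
    linarith

lemma commute_smallWeightProj_tensorFam (hτ : ∀ i, (τ i).IsHermitian) (c : ℝ) :
    Commute (smallWeightProj (fun i => eigenbasis (τ i)) (fun i => eigenvals (τ i)) c)
      (tensorFam τ) := by
  rw [tensorFam_eq_unitaryDiagonal hτ]
  exact (Commute.all _ _).map (unitaryDiagonal _)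

theorem reTrace_mul_tensorFam_le [Nonempty d] (hr : ∀ j, 0 < r j) (hL : 0 < L)
    (hrL : ∀ j, |Real.log (r j)| ≤ L) (hτ : ∀ i, IsDensity (τ i)) (hδ : 0 < δ)
    {D : Matrix (k → d) (k → d) ℂ} (hD : 0 ≤ D) (hD1 : D ≤ 1) :
    reTrace (D * tensorFam τ)
      ≤ 2 * Real.exp (∑ i, relEntDiag U r (τ i) + Fintype.card k * (2 * δ))
          * reTrace (D * tensorFam fun _ => unitaryDiagonal U r)
        + atypicalBound (Fintype.card k) (Fintype.card d) δ L := by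
  have small_le := smallWeightProj_conj_tensorFam_le (fun i => eigenbasis (τ i))
    (fun i => eigenvals (τ i)) (∑ i, vonNeumannEntropy (τ i) - Fintype.card k * δ)
  simp only [unitaryDiagonal_eigenvals (hτ _).isHermitian] at small_le
  have h := reTrace_mul_le_of_projections (isStarProjection_smallWeightProj _ _ _)
    (isStarProjection_largeWeightProj _ _ _) (isDensity_tensorFam hτ).nonneg
    (commute_smallWeightProj_tensorFam (fun i => (hτ i).isHermitian) _) hD hD1 (Real.exp_pos _).le
    small_le (largeWeightProj_le (fun _ : k => U) (fun _ j => (hr j).le)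
      (∑ i, ∑ j, diagInBasis U (τ i) j * -Real.log (r j) + Fintype.card k * δ))
  have exponent_eq : -(∑ i, vonNeumannEntropy (τ i) - Fintype.card k * δ)
        + (∑ i, ∑ j, diagInBasis U (τ i) j * -Real.log (r j) + Fintype.card k * δ)
      = ∑ i, relEntDiag U r (τ i) + Fintype.card k * (2 * δ) := by
    simp only [relEntDiag, Finset.sum_sub_distrib]
    ring
  rw [← Real.exp_add, exponent_eq] at h
  unfold atypicalBound
  linarith [reTrace_one_sub_smallWeightProj_le hτ hδ,
    reTrace_one_sub_largeWeightProj_le U hr hL hrL hτ hδ]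

end SingleCodeword

/-! ### Reference state -/

section ReferenceState

open scoped MatrixOrder
open Matrix

variable {d : Type*} [Fintype d] [DecidableEq d] {σ : Matrix d d ℂ} {L : ℝ}

/-- The eigenvalues of `σ`, raised to `exp (-L)` where they are smaller. -/
def truncatedEigenvals (σ : Matrix d d ℂ) (L : ℝ) (j : d) : ℝ :=
  max (eigenvals σ j) (Real.exp (-L))

lemma truncatedEigenvals_pos (σ : Matrix d d ℂ) (L : ℝ) (j : d) : 0 < truncatedEigenvals σ L j :=
  (Real.exp_pos _).trans_le (le_max_right _ _)

lemma truncatedEigenvals_le_one (hσ : IsDensity σ) (hL : 0 ≤ L) (j : d) :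
    truncatedEigenvals σ L j ≤ 1 :=
  max_le (hσ.eigenvals_le_one j) (Real.exp_le_one_iff.2 (neg_nonpos.2 hL))

lemma abs_log_truncatedEigenvals_le (hσ : IsDensity σ) (hL : 0 ≤ L) (j : d) :
    |Real.log (truncatedEigenvals σ L j)| ≤ L := by
  rw [abs_of_nonpos (Real.log_nonpos (truncatedEigenvals_pos σ L j).le
    (truncatedEigenvals_le_one hσ hL j)), neg_le,
    Real.le_log_iff_exp_le (truncatedEigenvals_pos σ L j)]
  exact le_max_right _ _

lemma sum_truncatedEigenvals_le (hσ : IsDensity σ) (L : ℝ) :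
    ∑ j, truncatedEigenvals σ L j ≤ 1 + Fintype.card d * Real.exp (-L) := by
  calc ∑ j, truncatedEigenvals σ L j ≤ ∑ j, (eigenvals σ j + Real.exp (-L)) :=
        Finset.sum_le_sum fun j _ =>
          max_le_add_of_nonneg (eigenvals_nonneg hσ.nonneg j) (Real.exp_pos _).le
    _ = _ := by rw [Finset.sum_add_distrib, hσ.sum_eigenvals, Finset.sum_const, Finset.card_univ,
          nsmul_eq_mul]

lemma reTrace_tensorFam_unitaryDiagonal {k : Type*} [Fintype k] [DecidableEq k]
    (U : unitaryGroup d ℂ) (r : d → ℝ) :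
    reTrace (tensorFam fun _ : k => unitaryDiagonal U r) = (∑ j, r j) ^ Fintype.card k := by
  rw [tensorFam_unitaryDiagonal, ← sum_diagInBasis (tensorUnitary fun _ => U),
    diagInBasis_unitaryDiagonal, ← Fintype.piFinset_univ,
    ← Finset.prod_univ_sum (fun _ => Finset.univ) fun _ => r, Finset.prod_const, Finset.card_univ]

lemma reTrace_tensorFam_truncatedEigenvals_le {k : Type*} [Fintype k] [DecidableEq k]
    (hσ : IsDensity σ) (U : unitaryGroup d ℂ) (L : ℝ) :
    reTrace (tensorFam fun _ : k => unitaryDiagonal U (truncatedEigenvals σ L))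
      ≤ Real.exp (Fintype.card k * (Fintype.card d * Real.exp (-L))) := by
  rw [reTrace_tensorFam_unitaryDiagonal, Real.exp_nat_mul]
  refine pow_le_pow_left₀ (Finset.sum_nonneg fun j _ => (truncatedEigenvals_pos σ L j).le) ?_ _
  linarith [sum_truncatedEigenvals_le hσ L, Real.add_one_le_exp (Fintype.card d * Real.exp (-L))]

lemma neg_card_le_relEntDiag (U : unitaryGroup d ℂ) {r : d → ℝ} (hr : ∀ j, 0 ≤ r j)
    (hr1 : ∀ j, r j ≤ 1) {A : Matrix d d ℂ} (hA : IsDensity A) :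
    -(Fintype.card d : ℝ) ≤ relEntDiag U r A := by
  have cross_nonneg : 0 ≤ ∑ j, diagInBasis U A j * -Real.log (r j) :=
    Finset.sum_nonneg fun j _ => mul_nonneg (diagInBasis_nonneg U hA.nonneg j)
      (neg_nonneg.2 (Real.log_nonpos (hr j) (hr1 j)))
  unfold relEntDiag
  linarith [hA.vonNeumannEntropy_le_card]

lemma sum_mul_relEntDiag_le_holevoInfo {X : Type*} [Fintype X] {P : X → ℝ} {τ : X → Matrix d d ℂ}
    (hσ : IsDensity (∑ x, P x • τ x)) (L : ℝ) :
    ∑ x, P x * relEntDiag (eigenbasis (∑ x, P x • τ x))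
        (truncatedEigenvals (∑ x, P x • τ x) L) (τ x)
      ≤ holevoInfo P τ := by
  have cross_eq : ∑ x, P x * ∑ j, diagInBasis (eigenbasis (∑ x, P x • τ x)) (τ x) j
        * -Real.log (truncatedEigenvals (∑ x, P x • τ x) L j)
      = ∑ j, eigenvals (∑ x, P x • τ x) j
        * -Real.log (truncatedEigenvals (∑ x, P x • τ x) L j) := by
    simp only [← sum_mul_diagInBasis_eigenbasis hσ.isHermitian, Finset.mul_sum, Finset.sum_mul,
      mul_assoc]
    exact Finset.sum_comm
  simp only [relEntDiag, holevoInfo, mul_sub, Finset.sum_sub_distrib, cross_eq]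
  refine sub_le_sub_right (Finset.sum_le_sum fun j _ => ?_) _
  rw [Real.negMulLog, neg_mul_comm]
  rcases (eigenvals_nonneg hσ.nonneg j).eq_or_lt with hj | hj
  · rw [← hj, Pi.zero_apply, zero_mul, zero_mul]
  · exact mul_le_mul_of_nonneg_left
      (neg_le_neg (Real.log_le_log hj (le_max_left _ _))) hj.le

end ReferenceState

/-! ### Converse -/

namespace RandomCode

open scoped MatrixOrder
open Matrix

section Mean

variable {Γ Y ι μ : Type*} [Fintype Γ] [Fintype ι] [DecidableEq ι] [Fintype μ]
  (C : RandomCode Γ Y ι μ)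

/-- The expectation over the choice of the code and a uniformly distributed message. -/
def mean : (Γ × μ → ℝ) →ₗ[ℝ] ℝ :=
  ∑ ω : Γ × μ, (C.weight ω.1 / Fintype.card μ) • LinearMap.proj ω

lemma mean_apply (z : Γ × μ → ℝ) :
    C.mean z = ∑ γ, C.weight γ * ((∑ m, z (γ, m)) / Fintype.card μ) := by
  simp only [mean, LinearMap.sum_apply, LinearMap.smul_apply, LinearMap.proj_apply, smul_eq_mul,
    Fintype.sum_prod_type, Finset.sum_div, Finset.mul_sum, div_mul_eq_mul_div, mul_div_assoc]

lemma mean_mono {z z' : Γ × μ → ℝ} (h : ∀ ω, z ω ≤ z' ω) : C.mean z ≤ C.mean z' := by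
  simp only [mean_apply]
  have := C.weight_nonneg
  gcongr with γ _ m
  exacts [this γ, h _]

lemma mean_nonneg {z : Γ × μ → ℝ} (h : ∀ ω, 0 ≤ z ω) : 0 ≤ C.mean z := by
  simpa using C.mean_mono (z := 0) h

lemma mean_const [Nonempty μ] (a : ℝ) : C.mean (fun _ => a) = a := by
  simp only [mean_apply, Finset.sum_const, Finset.card_univ, nsmul_eq_mul]
  rw [mul_div_cancel_left₀ _ (Nat.cast_ne_zero.2 Fintype.card_ne_zero), ← Finset.sum_mul,
    C.sum_weight, one_mul]

lemma mul_mean_indicator_sub_le [Nonempty μ] {z : Γ × μ → ℝ} {a : ℝ} (hz : ∀ ω, -a ≤ z ω)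
    (θ : ℝ) : (θ + a) * C.mean ({ω | θ ≤ z ω}.indicator 1) - a ≤ C.mean z := by
  rw [← smul_eq_mul, ← map_smul, ← C.mean_const a, ← map_sub, C.mean_const]
  refine C.mean_mono fun ω => ?_
  by_cases hω : θ ≤ z ω
  · simp [hω]
  · simpa [hω] using hz ω

lemma mean_reTrace_decoder_mul (A : Matrix ι ι ℂ) :
    C.mean (fun ω => reTrace ((C.code ω.1).decoder ω.2 * A)) = reTrace A / Fintype.card μ := by
  simp only [mean_apply, ← map_sum, ← Finset.sum_mul, (C.code _).sum_decoder, one_mul,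
    C.sum_weight]

/-- The probability of decoding the message of `ω` correctly if the channel is `R`. -/
def successProb (R : Y → Matrix ι ι ℂ) (ω : Γ × μ) : ℝ :=
  reTrace ((C.code ω.1).decoder ω.2 * R ((C.code ω.1).encoder ω.2))

lemma avgError_eq_one_sub_mean (R : Y → Matrix ι ι ℂ) :
    C.avgError R = 1 - C.mean (C.successProb R) := by
  simp only [avgError, CQCode.avgError, mean_apply, mul_sub, Finset.sum_sub_distrib, mul_one,
    C.sum_weight, one_div_mul_eq_div, successProb]

lemma avgError_sum_smul {σ : Type*} {S : Finset σ} {w : σ → ℝ} (hw : ∑ s ∈ S, w s = 1)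
    (R : σ → Y → Matrix ι ι ℂ) :
    C.avgError (fun y => ∑ s ∈ S, w s • R s y) = ∑ s ∈ S, w s * C.avgError (R s) := by
  simp only [avgError, CQCode.avgError_sum_smul _ hw, Finset.mul_sum]
  rw [Finset.sum_comm]
  simp only [mul_left_comm]

variable {R : Y → Matrix ι ι ℂ}

lemma successProb_nonneg (hR : ∀ y, IsDensity (R y)) (ω : Γ × μ) : 0 ≤ C.successProb R ω :=
  reTrace_mul_nonneg (nonneg_iff_posSemidef.2 ((C.code ω.1).posSemidef_decoder ω.2)) (hR _).nonneg

lemma successProb_le_one (hR : ∀ y, IsDensity (R y)) (ω : Γ × μ) : C.successProb R ω ≤ 1 := by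
  have h := reTrace_mul_le_mul_right ((C.code ω.1).decoder_le_one ω.2)
    (hR ((C.code ω.1).encoder ω.2)).nonneg
  rwa [one_mul, (hR _).reTrace_eq_one] at h

lemma avgError_le_one (hR : ∀ y, IsDensity (R y)) : C.avgError R ≤ 1 := by
  linarith [C.avgError_eq_one_sub_mean R, C.mean_nonneg (C.successProb_nonneg hR)]

end Mean

section ProductChannel

variable {Γ k X d μ : Type*} [Fintype Γ] [Fintype k] [DecidableEq k] [Fintype d] [DecidableEq d]
  [Fintype μ] (C : RandomCode Γ (k → X) (k → d) μ)

/-- The average of the letter weights `w` over the codeword of `ω`. -/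
def letterAverage (w : X → ℝ) (ω : Γ × μ) : ℝ :=
  (∑ i, w ((C.code ω.1).encoder ω.2 i)) / Fintype.card k

lemma le_letterAverage [Nonempty k] {w : X → ℝ} {a : ℝ} (hw : ∀ x, a ≤ w x) (ω : Γ × μ) :
    a ≤ C.letterAverage w ω := by
  rw [letterAverage, le_div_iff₀ (by positivity), mul_comm, ← nsmul_eq_mul]
  exact Finset.card_nsmul_le_sum _ _ _ fun i _ => hw _

/-- The distribution of a uniformly chosen letter of the random codeword. -/
def inputDist [DecidableEq X] (x : X) : ℝ :=
  C.mean fun ω => empiricalDist ((C.code ω.1).encoder ω.2) x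

lemma inputDist_nonneg [DecidableEq X] (x : X) : 0 ≤ C.inputDist x :=
  C.mean_nonneg fun _ => empiricalDist_nonneg _ x

lemma sum_inputDist_mul [DecidableEq X] [Fintype X] (w : X → ℝ) :
    ∑ x, C.inputDist x * w x = C.mean (C.letterAverage w) := by
  have average_eq : C.letterAverage w
      = ∑ x, w x • fun ω : Γ × μ => empiricalDist ((C.code ω.1).encoder ω.2) x := by
    ext ω
    simp only [letterAverage, ← sum_empiricalDist_mul, Finset.sum_apply, Pi.smul_apply,
      smul_eq_mul, mul_comm]
  rw [average_eq, map_sum]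
  simp only [map_smul, smul_eq_mul, mul_comm, inputDist]

lemma sum_inputDist [DecidableEq X] [Fintype X] [Nonempty k] [Nonempty μ] :
    ∑ x, C.inputDist x = 1 := by
  have average_one : C.letterAverage (fun _ => 1) = fun _ => 1 := by
    ext ω
    simp [letterAverage]
  simpa [average_one, C.mean_const] using C.sum_inputDist_mul fun _ => 1

variable [Nonempty k] [Nonempty d] {τ : X → Matrix d d ℂ} {θ δ L : ℝ}

lemma successProb_tensorFam_le (hτ : ∀ x, IsDensity (τ x)) (hL : 0 < L) (hδ : 0 < δ)
    (U : unitaryGroup d ℂ) {r : d → ℝ} (hr : ∀ j, 0 < r j) (hrL : ∀ j, |Real.log (r j)| ≤ L)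
    (ω : Γ × μ) :
    C.successProb (fun x => tensorFam fun i => τ (x i)) ω
      ≤ {ω | θ ≤ C.letterAverage (fun x => relEntDiag U r (τ x)) ω}.indicator 1 ω
        + 2 * Real.exp (Fintype.card k * (θ + 2 * δ))
          * reTrace ((C.code ω.1).decoder ω.2 * tensorFam fun _ => unitaryDiagonal U r)
        + atypicalBound (Fintype.card k) (Fintype.card d) δ L := by
  have decoder_nonneg : 0 ≤ (C.code ω.1).decoder ω.2 :=
    nonneg_iff_posSemidef.2 ((C.code ω.1).posSemidef_decoder ω.2)
  have reference_nonneg : 0 ≤ reTrace ((C.code ω.1).decoder ω.2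
      * tensorFam fun _ => unitaryDiagonal U r) :=
    reTrace_mul_nonneg decoder_nonneg
      (tensorFam_nonneg fun _ => unitaryDiagonal_nonneg U fun j => (hr j).le)
  by_cases hω : ω ∈ {ω | θ ≤ C.letterAverage (fun x => relEntDiag U r (τ x)) ω}
  · rw [Set.indicator_of_mem hω, Pi.one_apply]
    have success_le := C.successProb_le_one
      (fun x : k → X => isDensity_tensorFam fun i => hτ (x i)) ω
    have := mul_nonneg (Real.exp_pos (Fintype.card k * (θ + 2 * δ))).le reference_nonneg
    linarith [atypicalBound_nonneg (Fintype.card k) (Fintype.card d) δ L]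
  · rw [Set.indicator_of_notMem hω, zero_add]
    refine (reTrace_mul_tensorFam_le U hr hL hrL (fun i => hτ _) hδ decoder_nonneg
      ((C.code ω.1).decoder_le_one ω.2)).trans ?_
    rw [Set.mem_ofPred_eq, letterAverage, le_div_iff₀ (by positivity), not_le] at hω
    gcongr
    linarith

lemma one_sub_avgError_tensorFam_le [Nonempty μ] (hτ : ∀ x, IsDensity (τ x)) (hL : 0 < L)
    (hδ : 0 < δ) (U : unitaryGroup d ℂ) {r : d → ℝ} (hr : ∀ j, 0 < r j)
    (hrL : ∀ j, |Real.log (r j)| ≤ L) :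
    1 - C.avgError (fun x => tensorFam fun i => τ (x i))
      ≤ C.mean ({ω | θ ≤ C.letterAverage (fun x => relEntDiag U r (τ x)) ω}.indicator 1)
        + 2 * Real.exp (Fintype.card k * (θ + 2 * δ))
          * (reTrace (tensorFam fun _ : k => unitaryDiagonal U r) / Fintype.card μ)
        + atypicalBound (Fintype.card k) (Fintype.card d) δ L := by
  rw [avgError_eq_one_sub_mean, sub_sub_cancel, ← mean_reTrace_decoder_mul C, ← smul_eq_mul,
    ← map_smul, ← map_add, ← C.mean_const (atypicalBound _ _ _ _), ← map_add]
  exact C.mean_mono (C.successProb_tensorFam_le hτ hL hδ U hr hrL)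

theorem le_holevoInfo_inputDist [DecidableEq X] [Fintype X] [Nonempty μ]
    (hτ : ∀ x, IsDensity (τ x)) (hL : 0 < L) (hδ : 0 < δ) (hθ : 0 ≤ θ + Fintype.card d) :
    (θ + Fintype.card d) * (1 - C.avgError (fun x => tensorFam fun i => τ (x i))
        - (2 * Real.exp (Fintype.card k * (θ + 2 * δ + Fintype.card d * Real.exp (-L)))
            / Fintype.card μ + atypicalBound (Fintype.card k) (Fintype.card d) δ L))
      - Fintype.card d ≤ holevoInfo C.inputDist τ := by
  set σ := ∑ x, C.inputDist x • τ x
  have hσ : IsDensity σ :=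
    isDensity_sum_smul (fun x _ => C.inputDist_nonneg x) C.sum_inputDist fun x _ => hτ x
  set U := eigenbasis σ
  set r := truncatedEigenvals σ L
  set z := C.letterAverage fun x => relEntDiag U r (τ x)
  have z_bound : ∀ ω, -(Fintype.card d : ℝ) ≤ z ω :=
    C.le_letterAverage fun x => neg_card_le_relEntDiag U
      (fun j => (truncatedEigenvals_pos σ L j).le) (truncatedEigenvals_le_one hσ hL.le) (hτ x)
  have success_le := C.one_sub_avgError_tensorFam_le (θ := θ) hτ hL hδ U
    (truncatedEigenvals_pos σ L) (abs_log_truncatedEigenvals_le hσ hL.le)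
  have reference_le : 2 * Real.exp (Fintype.card k * (θ + 2 * δ))
        * (reTrace (tensorFam fun _ : k => unitaryDiagonal U r) / Fintype.card μ)
      ≤ 2 * Real.exp (Fintype.card k * (θ + 2 * δ + Fintype.card d * Real.exp (-L)))
        / Fintype.card μ := by
    rw [mul_add _ (θ + 2 * δ), Real.exp_add, ← mul_assoc 2, ← mul_div_assoc]
    gcongr
    exact reTrace_tensorFam_truncatedEigenvals_le hσ U L
  calc _ ≤ (θ + Fintype.card d) * C.mean ({ω | θ ≤ z ω}.indicator 1) - Fintype.card d := by
        gcongr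
        linarith
    _ ≤ C.mean z := C.mul_mean_indicator_sub_le z_bound θ
    _ = ∑ x, C.inputDist x * relEntDiag U r (τ x) := (C.sum_inputDist_mul _).symm
    _ ≤ holevoInfo C.inputDist τ := sum_mul_relEntDiag_le_holevoInfo hσ L

end ProductChannel

end RandomCode

section Converse

open scoped MatrixOrder

variable {𝒳 𝒮 : Type*} {d : ℕ} {ρ : 𝒳 → 𝒮 → Matrix (Fin d) (Fin d) ℂ} {β : ℝ}

lemma tendsto_atypicalBound [NeZero d] {δ L : ℝ} (hδ : 0 < δ) (hL : 0 < L) :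
    Tendsto (fun n => atypicalBound n d δ L) atTop (nhds 0) := by
  have d_pos : (0 : ℝ) < d := Nat.cast_pos.2 (NeZero.pos d)
  have h := (tendsto_pow_mul_exp_neg_mul 0
      (chernoffRate_pos hδ (mul_pos (by norm_num : (0 : ℝ) < 16) d_pos))).add
    ((tendsto_pow_mul_exp_neg_mul 0
      (chernoffRate_pos hδ (mul_pos (pow_pos hL 2) (Real.exp_pos L)))).const_mul 2)
  simpa only [pow_zero, one_mul, mul_zero, add_zero, atypicalBound] using h

namespace RandomCode

variable {Γ k μ : Type*} [Fintype Γ] [Fintype k] [DecidableEq k] [Fintype μ]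

lemma nonempty_message {Y ι : Type*} [Fintype ι] [DecidableEq ι] [Nonempty ι]
    (C : RandomCode Γ Y ι μ) : Nonempty μ := by
  have : Nonempty Γ := by
    by_contra! _
    simpa using C.sum_weight
  by_contra! _
  simpa using (C.code (Classical.arbitrary Γ)).sum_decoder

lemma avgError_averagedState_le (C : RandomCode Γ (k → 𝒳) (k → Fin d) μ)
    (hC : ∀ s : k → 𝒮, C.avgError (fun x => tensorFam fun i => ρ (x i) (s i)) ≤ β)
    (Q : FinProb 𝒮) :
    C.avgError (fun x => tensorFam fun i => averagedState ρ Q.1 (x i)) ≤ β := by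
  have weight_sum : ∑ s ∈ Fintype.piFinset fun _ : k => Q.1.support, ∏ i, Q.1 (s i) = 1 := by
    rw [← Finset.prod_univ_sum (fun _ => Q.1.support) fun _ => Q.1]
    exact Finset.prod_eq_one fun _ _ => Q.2.2
  have expand : ∀ x : k → 𝒳, (tensorFam fun i => averagedState ρ Q.1 (x i))
      = ∑ s ∈ Fintype.piFinset fun _ : k => Q.1.support,
          (∏ i, Q.1 (s i)) • tensorFam fun i => ρ (x i) (s i) := fun x =>
    tensorFam_sum_smul (fun _ => Q.1.support) (fun _ => Q.1) fun i => ρ (x i)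
  simp only [expand, C.avgError_sum_smul weight_sum]
  calc _ ≤ ∑ s ∈ Fintype.piFinset fun _ : k => Q.1.support, (∏ i, Q.1 (s i)) * β :=
        Finset.sum_le_sum fun s _ => mul_le_mul_of_nonneg_left (hC s)
          (Finset.prod_nonneg fun i _ => Q.2.1 _)
    _ = β := by rw [← Finset.sum_mul, weight_sum, one_mul]

theorem le_mutInfI_inputDist [Fintype 𝒳] [DecidableEq 𝒳] [NeZero d] [Nonempty k]
    (hρ : ∀ x s, IsDensity (ρ x s)) (C : RandomCode Γ (k → 𝒳) (k → Fin d) μ)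
    (hC : ∀ s : k → 𝒮, C.avgError (fun x => tensorFam fun i => ρ (x i) (s i)) ≤ β) {R θ δ L : ℝ}
    (hR : Real.exp (Fintype.card k * R) ≤ Fintype.card μ) (hθ : 0 ≤ θ + d) (hL : 0 < L)
    (hδ : 0 < δ) (Q : FinProb 𝒮) :
    (θ + d) * (1 - β - (2 * Real.exp (Fintype.card k * (θ + 2 * δ + d * Real.exp (-L) - R))
        + atypicalBound (Fintype.card k) d δ L)) - d
      ≤ mutInfI ρ C.inputDist Q.1 * Real.log 2 := by
  have := C.nonempty_message
  have h := C.le_holevoInfo_inputDist (isDensity_averagedState hρ Q) hL hδ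
    (by rwa [Fintype.card_fin])
  rw [Fintype.card_fin] at h
  rw [mutInfI_mul_log_two hρ ⟨C.inputDist, C.inputDist_nonneg, C.sum_inputDist⟩ Q]
  refine le_trans ?_ h
  have size_le : 2 * Real.exp (Fintype.card k * (θ + 2 * δ + d * Real.exp (-L))) / Fintype.card μ
      ≤ 2 * Real.exp (Fintype.card k * (θ + 2 * δ + d * Real.exp (-L) - R)) := by
    rw [mul_sub, Real.exp_sub, ← mul_div_assoc]
    gcongr
  gcongr
  exact C.avgError_averagedState_le hC Q

theorem sub_le_mutInfI_inputDist [Fintype 𝒳] [DecidableEq 𝒳] [NeZero d] [Nonempty k]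
    (hρ : ∀ x s, IsDensity (ρ x s)) (C : RandomCode Γ (k → 𝒳) (k → Fin d) μ)
    (hC : ∀ s : k → 𝒮, C.avgError (fun x => tensorFam fun i => ρ (x i) (s i)) ≤ β) {R g : ℝ}
    (hR : Real.exp (Fintype.card k * (R - g / 8)) ≤ Fintype.card μ) (hR0 : 0 ≤ R) (hg : 0 < g)
    (hg1 : g ≤ 1) (hβ : (R + d) * β ≤ g / 8)
    (htail : 2 * Real.exp (-(Fintype.card k * (g / 8)))
      + atypicalBound (Fintype.card k) d (g / 32) (8 * d / g) ≤ β) (Q : FinProb 𝒮) :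
    R - g ≤ mutInfI ρ C.inputDist Q.1 * Real.log 2 := by
  have one_le_d : (1 : ℝ) ≤ d := Nat.one_le_cast.2 (NeZero.pos d)
  have L_pos : 0 < 8 * d / g := by positivity
  have truncation_le : d * Real.exp (-(8 * d / g)) ≤ g / 8 :=
    calc d * Real.exp (-(8 * d / g)) ≤ d * (8 * d / g)⁻¹ := by
          rw [Real.exp_neg]
          gcongr
          linarith [Real.add_one_le_exp (8 * d / g)]
      _ = g / 8 := by field_simp
  have θ_add_d_pos : 0 < R - g / 2 + d := by linarith
  have h := C.le_mutInfI_inputDist hρ hC hR θ_add_d_pos.le L_pos (by positivity : 0 < g / 32) Q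
  have β_nonneg : 0 ≤ β :=
    le_trans (add_nonneg (by positivity) (atypicalBound_nonneg _ _ _ _)) htail
  have tail_le : 2 * Real.exp (Fintype.card k * (R - g / 2 + 2 * (g / 32)
        + d * Real.exp (-(8 * d / g)) - (R - g / 8)))
      + atypicalBound (Fintype.card k) d (g / 32) (8 * d / g) ≤ β := by
    refine le_trans ?_ htail
    rw [← mul_neg]
    gcongr
    linarith
  have product_le := mul_le_mul_of_nonneg_left tail_le θ_add_d_pos.le
  have := mul_nonneg hg.le β_nonneg
  linarith

end RandomCode

lemma exp_le_of_le_logb {n M : ℕ} (hn : 0 < n) (hM : 0 < M) {R : ℝ}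
    (h : R ≤ (1 / (n : ℝ)) * Real.logb 2 M) : Real.exp (n * (R * Real.log 2)) ≤ M := by
  rw [Real.logb, one_div_mul_eq_div, le_div_iff₀ (by positivity),
    le_div_iff₀ (Real.log_pos one_lt_two)] at h
  rw [← Real.le_log_iff_exp_le (by positivity)]
  linarith

theorem IsAchievableRate.exists_probDist_le_mutInfI [Fintype 𝒳] [DecidableEq 𝒳] [NeZero d]
    (hρ : ∀ x s, IsDensity (ρ x s)) {R : ℝ} (hR : IsAchievableRate ρ R) {η : ℝ} (hη : 0 < η) :
    ∃ P : ProbDist 𝒳, ∀ Q : FinProb 𝒮,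
      R * Real.log 2 - η ≤ mutInfI ρ P.1 Q.1 * Real.log 2 := by
  obtain ⟨g, g_pos, g_le, g_le_one⟩ : ∃ g : ℝ, 0 < g ∧ g ≤ η ∧ g ≤ 1 :=
    ⟨min η 1, lt_min hη one_pos, min_le_left _ _, min_le_right _ _⟩
  have log_pos : 0 < Real.log 2 := Real.log_pos one_lt_two
  have d_pos : (0 : ℝ) < d := Nat.cast_pos.2 (NeZero.pos d)
  have Rd_pos : 0 < R * Real.log 2 + d :=
    add_pos_of_nonneg_of_pos (mul_nonneg hR.1 log_pos.le) d_pos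
  have β_pos : 0 < g / 8 / (R * Real.log 2 + d) := by positivity
  have tail_tendsto : Tendsto (fun n : ℕ => 2 * Real.exp (-(n * (g / 8)))
      + atypicalBound n d (g / 32) (8 * d / g)) atTop (nhds 0) := by
    simpa using ((tendsto_pow_mul_exp_neg_mul 0 (by positivity : 0 < g / 8)).const_mul 2).add
      (tendsto_atypicalBound (d := d) (by positivity) (by positivity))
  obtain ⟨N, hN⟩ := hR.2 _ β_pos (g / 8 / Real.log 2) (by positivity)
  obtain ⟨n, hnN, n_pos, tail_lt⟩ := ((eventually_ge_atTop N).and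
    ((eventually_gt_atTop 0).and (tail_tendsto.eventually (gt_mem_nhds β_pos)))).exists
  obtain ⟨M, K, C, rate_gt, error_lt⟩ := hN n hnN
  have : NeZero n := ⟨n_pos.ne'⟩
  have := C.nonempty_message
  have error_bdd : BddAbove (Set.range fun s : Fin n → 𝒮 =>
      C.avgError fun x => tensorFam fun i => ρ (x i) (s i)) :=
    ⟨1, Set.forall_mem_range.2 fun s => C.avgError_le_one fun x =>
      isDensity_tensorFam fun i => hρ (x i) (s i)⟩
  have size_ge := exp_le_of_le_logb n_pos (Fin.pos_iff_nonempty.2 this) rate_gt.le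
  rw [sub_mul, div_mul_cancel₀ _ log_pos.ne'] at size_ge
  refine ⟨⟨C.inputDist, C.inputDist_nonneg, C.sum_inputDist⟩, fun Q => ?_⟩
  have h := C.sub_le_mutInfI_inputDist hρ (fun s => (le_ciSup error_bdd s).trans error_lt.le)
    (by simpa using size_ge) (mul_nonneg hR.1 log_pos.le) g_pos g_le_one
    (mul_div_cancel₀ _ Rd_pos.ne').le (by simpa using tail_lt.le) Q
  linarith

end Converse

/-! ### Capacity -/

section Capacity

lemma abs_holevoInfo_le {X d : Type*} [Fintype X] [Fintype d] [DecidableEq d] {P : X → ℝ}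
    (hP : ∀ x, 0 ≤ P x) (hP1 : ∑ x, P x = 1) {τ : X → Matrix d d ℂ} (hτ : ∀ x, IsDensity (τ x)) :
    |holevoInfo P τ| ≤ Fintype.card d := by
  have hσ : IsDensity (∑ x, P x • τ x) := isDensity_sum_smul (fun x _ => hP x) hP1 fun x _ => hτ x
  have mean_nonneg : 0 ≤ ∑ x, P x * vonNeumannEntropy (τ x) :=
    Finset.sum_nonneg fun x _ => mul_nonneg (hP x) (hτ x).vonNeumannEntropy_nonneg
  have mean_le : ∑ x, P x * vonNeumannEntropy (τ x) ≤ Fintype.card d :=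
    calc _ ≤ ∑ x, P x * Fintype.card d := Finset.sum_le_sum fun x _ =>
          mul_le_mul_of_nonneg_left (hτ x).vonNeumannEntropy_le_card (hP x)
      _ = Fintype.card d := by rw [← Finset.sum_mul, hP1, one_mul]
  exact abs_sub_le_of_nonneg_of_le hσ.vonNeumannEntropy_nonneg hσ.vonNeumannEntropy_le_card
    mean_nonneg mean_le

lemma IsDensity.nonempty {ι : Type*} [Fintype ι] {A : Matrix ι ι ℂ} (hA : IsDensity A) :
    Nonempty ι := by
  by_contra! _
  simpa using hA.2

variable {𝒳 𝒮 : Type*} {d : ℕ} {ρ : 𝒳 → 𝒮 → Matrix (Fin d) (Fin d) ℂ}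

lemma isAchievableRate_iff (ρ : 𝒳 → 𝒮 → Matrix (Fin d) (Fin d) ℂ) (R : ℝ) :
    IsAchievableRate ρ R ↔ 0 ≤ R ∧
      ∀ β > (0 : ℝ), ∀ δ > (0 : ℝ), ∃ N : ℕ, ∀ n ≥ N,
        ∃ (M k : ℕ) (G : Fin k → ℝ) (f : Fin k → Fin M → (Fin n → 𝒳))
          (D : Fin k → Fin M → Matrix (Fin n → Fin d) (Fin n → Fin d) ℂ),
          (∀ γ, 0 ≤ G γ) ∧ (∑ γ, G γ = 1) ∧
          (∀ γ m, (D γ m).PosSemidef) ∧ (∀ γ, ∑ m, D γ m = 1) ∧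
          (1 / (n : ℝ)) * Real.logb 2 M > R - δ ∧
          (⨆ s : Fin n → 𝒮,
            1 - (1 / (M : ℝ)) * ∑ m, ∑ γ, G γ *
              (Matrix.trace (D γ m * tensorFam fun i => ρ (f γ m i) (s i))).re) < β := by
  have avgError_eq : ∀ {n M K : ℕ} (C : RandomCode (Fin K) (Fin n → 𝒳) (Fin n → Fin d) (Fin M))
      (s : Fin n → 𝒮), C.avgError (fun x => tensorFam fun i => ρ (x i) (s i))
        = 1 - (1 / (M : ℝ)) * ∑ m, ∑ γ, C.weight γ * (Matrix.trace ((C.code γ).decoder m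
          * tensorFam fun i => ρ ((C.code γ).encoder m i) (s i))).re := fun C s => by
    rw [C.avgError_eq_one_sub_mean, C.mean_apply, Finset.sum_comm, Finset.mul_sum]
    simp only [← Finset.mul_sum, Fintype.card_fin, RandomCode.successProb, reTrace_apply,
      mul_left_comm, div_eq_inv_mul, mul_one]
  refine and_congr_right fun _ => forall₄_congr fun β _ δ _ => exists_congr fun N =>
    forall₂_congr fun n _ => exists₂_congr fun M K => ⟨?_, ?_⟩
  · rintro ⟨C, rate_gt, error_lt⟩
    simp only [avgError_eq] at error_lt
    exact ⟨C.weight, fun γ => (C.code γ).encoder, fun γ => (C.code γ).decoder, C.weight_nonneg,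
      C.sum_weight, fun γ => (C.code γ).posSemidef_decoder, fun γ => (C.code γ).sum_decoder,
      rate_gt, error_lt⟩
  · rintro ⟨G, f, D, G_nonneg, sum_G, posSemidef_D, sum_D, rate_gt, error_lt⟩
    refine ⟨⟨G, G_nonneg, sum_G, fun γ => ⟨f γ, D γ, posSemidef_D γ, sum_D γ⟩⟩, rate_gt, ?_⟩
    simpa only [avgError_eq] using error_lt

lemma isAchievableRate_zero [Nonempty 𝒳] [Nonempty 𝒮] (hρ : ∀ x s, IsDensity (ρ x s)) :
    IsAchievableRate ρ 0 := by
  refine ⟨le_rfl, fun β hβ δ hδ => ⟨0, fun n _ => ⟨1, 1, ⟨fun _ => 1, fun _ => zero_le_one,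
    by simp, fun _ => ⟨fun _ _ => Classical.arbitrary 𝒳, fun _ => 1,
      fun _ => Matrix.PosSemidef.one, by simp⟩⟩, by simpa using hδ, ?_⟩⟩⟩
  refine lt_of_le_of_lt (ciSup_le fun s => ?_) hβ
  simp [RandomCode.avgError, CQCode.avgError,
    (isDensity_tensorFam fun i => hρ (Classical.arbitrary 𝒳) (s i)).reTrace_eq_one]

instance [Nonempty 𝒮] : Nonempty (FinProb 𝒮) :=
  ⟨⟨Finsupp.single (Classical.arbitrary 𝒮) 1, fun s => Finsupp.single_nonneg.2 zero_le_one s,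
    Finsupp.sum_single_index rfl⟩⟩

instance [Fintype 𝒳] [Nonempty 𝒳] : Nonempty (ProbDist 𝒳) := by
  classical
  have single_nonneg : (0 : 𝒳 → ℝ) ≤ Pi.single (Classical.arbitrary 𝒳) 1 :=
    Pi.single_nonneg.2 zero_le_one
  exact ⟨⟨Pi.single (Classical.arbitrary 𝒳) 1, single_nonneg, by simp⟩⟩

variable [Fintype 𝒳] [DecidableEq 𝒳]

lemma abs_mutInfI_le (hρ : ∀ x s, IsDensity (ρ x s)) (P : ProbDist 𝒳) (Q : FinProb 𝒮) :
    |mutInfI ρ P.1 Q.1| ≤ d / Real.log 2 := by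
  have log_pos : 0 < Real.log 2 := Real.log_pos one_lt_two
  have h := abs_holevoInfo_le P.2.1 P.2.2 (isDensity_averagedState hρ Q)
  rwa [← mutInfI_mul_log_two hρ, abs_mul, abs_of_pos log_pos, Fintype.card_fin,
    ← le_div_iff₀ log_pos] at h

lemma bddBelow_mutInfI (hρ : ∀ x s, IsDensity (ρ x s)) (P : ProbDist 𝒳) :
    BddBelow (Set.range fun Q : FinProb 𝒮 => mutInfI ρ P.1 Q.1) :=
  ⟨_, Set.forall_mem_range.2 fun Q => neg_le_of_abs_le (abs_mutInfI_le hρ P Q)⟩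

lemma bddAbove_iInf_mutInfI [Nonempty 𝒮] (hρ : ∀ x s, IsDensity (ρ x s)) :
    BddAbove (Set.range fun P : ProbDist 𝒳 => ⨅ Q : FinProb 𝒮, mutInfI ρ P.1 Q.1) :=
  ⟨_, Set.forall_mem_range.2 fun P =>
    (ciInf_le (bddBelow_mutInfI hρ P) (Classical.arbitrary (FinProb 𝒮))).trans
      (le_of_abs_le (abs_mutInfI_le hρ P _))⟩

theorem IsAchievableRate.le_iSup_iInf_mutInfI [NeZero d] [Nonempty 𝒮]
    (hρ : ∀ x s, IsDensity (ρ x s)) {R : ℝ} (hR : IsAchievableRate ρ R) :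
    R ≤ ⨆ P : ProbDist 𝒳, ⨅ Q : FinProb 𝒮, mutInfI ρ P.1 Q.1 := by
  have log_pos : 0 < Real.log 2 := Real.log_pos one_lt_two
  refine le_of_forall_pos_sub_le fun ε hε => ?_
  obtain ⟨P, hP⟩ := hR.exists_probDist_le_mutInfI hρ (mul_pos hε log_pos)
  refine le_ciSup_of_le (bddAbove_iInf_mutInfI hρ) P (le_ciInf fun Q => ?_)
  refine le_of_mul_le_mul_right ?_ log_pos
  rw [sub_mul]
  exact hP Q

theorem isAchievableRate_of_lt_iSup_iInf_mutInfI [NeZero d] [Nonempty 𝒳] [Nonempty 𝒮]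
    (hρ : ∀ x s, IsDensity (ρ x s)) (hAss : AssumptionA ρ) {R : ℝ} (hR0 : 0 ≤ R)
    (hR : R < ⨆ P : ProbDist 𝒳, ⨅ Q : FinProb 𝒮, mutInfI ρ P.1 Q.1) : IsAchievableRate ρ R := by
  have log_pos : 0 < Real.log 2 := Real.log_pos one_lt_two
  obtain ⟨P, hP⟩ := exists_lt_of_lt_ciSup hR
  exact isAchievableRate_of_forall_le_mutInfI hρ hAss P
    (fun Q => mul_le_mul_of_nonneg_right (ciInf_le (bddBelow_mutInfI hρ P) Q) log_pos.le) hR0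
    (mul_lt_mul_of_pos_right hP log_pos)

end Capacity

/-- Under Assumption A, the random code capacity of the CQ-AVC equals
`sup_P inf_Q I[X;B]_{P,Q}`. The random code capacity is the supremum of the set of
achievable random code rates. -/
theorem statement5 {𝒳 𝒮 : Type*} [Fintype 𝒳] [DecidableEq 𝒳] [Nonempty 𝒳] [Nonempty 𝒮]
    {d : ℕ}
    (ρ : 𝒳 → 𝒮 → Matrix (Fin d) (Fin d) ℂ)
    (hρ : ∀ x s, IsDensity (ρ x s))
    (hAss : AssumptionA ρ) :
    sSup {R : ℝ | 0 ≤ R ∧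
      ∀ β > (0 : ℝ), ∀ δ > (0 : ℝ), ∃ N : ℕ, ∀ n ≥ N,
        ∃ (M k : ℕ) (G : Fin k → ℝ) (f : Fin k → Fin M → (Fin n → 𝒳))
          (D : Fin k → Fin M → Matrix (Fin n → Fin d) (Fin n → Fin d) ℂ),
          (∀ γ, 0 ≤ G γ) ∧ (∑ γ, G γ = 1) ∧
          (∀ γ m, (D γ m).PosSemidef) ∧ (∀ γ, ∑ m, D γ m = 1) ∧
          (1 / (n : ℝ)) * Real.logb 2 M > R - δ ∧
          (⨆ sv : Fin n → 𝒮,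
            1 - (1 / (M : ℝ)) * ∑ m, ∑ γ, G γ *
              (Matrix.trace (D γ m * tensorFam fun k' => ρ (f γ m k') (sv k'))).re) < β} =
      ⨆ P : ProbDist 𝒳, ⨅ Q : FinProb 𝒮, mutInfI ρ P.1 Q.1 := by
  have : NeZero d :=
    ⟨(Fin.pos_iff_nonempty.2 (hρ (Classical.arbitrary 𝒳) (Classical.arbitrary 𝒮)).nonempty).ne'⟩
  simp only [← isAchievableRate_iff]
  refine IsLUB.csSup_eq ⟨fun R hR => hR.le_iSup_iInf_mutInfI hρ, fun B hB => ?_⟩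
    ⟨0, isAchievableRate_zero hρ⟩
  refine le_of_forall_lt_imp_le_of_dense fun R hR => ?_
  rcases le_total 0 R with hR0 | hR0
  · exact hB (isAchievableRate_of_lt_iSup_iInf_mutInfI hρ hAss hR0 hR)
  · exact hR0.trans (hB (isAchievableRate_zero hρ))
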